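/- arXiv:1606.00323 — 3 statements merged into one kernel-verified Lean document; each statement's English description precedes it below -/
import Mathlib

section
/- Let G be a connected bridgeless multigraph, choose one edge e_S in each C1-set S of G, and let G^(3) be the graph obtained by contracting all edges not of the form e_S. Then no cycle of G is collapsed to a vertex, and the map sending a cycle C of G to the set { e_S : S ⊆ C } is a bijection from the set of cycles of G onto the set of cycles of G^(3). -/
/-- A finite multigraph: finite vertex and edge types, each edge carrying a source and a
target vertex (this is an auxiliary orientation); loops and parallel edges are allowed. -/
structure Multigraph where
  V : Type
  E : Type
  [fV : Fintype V]
  [fE : Fintype E]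
  [dV : DecidableEq V]
  [dE : DecidableEq E]
  s : E → V
  t : E → V

attribute [instance] Multigraph.fV Multigraph.fE Multigraph.dV Multigraph.dE

namespace Multigraph

variable (G : Multigraph)

/-- Two vertices are adjacent if some edge joins them. -/
def Adj (a b : G.V) : Prop :=
  ∃ e : G.E, (G.s e = a ∧ G.t e = b) ∨ (G.s e = b ∧ G.t e = a)

/-- A multigraph is connected if it is nonempty and any two vertices are joined by a walk. -/
def Connected : Prop :=
  Nonempty G.V ∧ ∀ a b : G.V, Relation.ReflTransGen G.Adj a b

/-- The graph obtained by deleting the edges in `F` is connected. -/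
def ConnectedAvoiding (F : Set G.E) : Prop :=
  ∀ a b : G.V, Relation.ReflTransGen
    (fun x y => ∃ e : G.E, e ∉ F ∧ ((G.s e = x ∧ G.t e = y) ∨ (G.s e = y ∧ G.t e = x))) a b

/-- The valency of a vertex: the number of half-edges at it (a loop counts twice). -/
def val (v : G.V) : ℕ :=
  (Finset.univ.filter (fun e => G.s e = v)).card + (Finset.univ.filter (fun e => G.t e = v)).card

/-- The number of loops based at a vertex. -/
def loops (v : G.V) : ℕ :=
  (Finset.univ.filter (fun e => G.s e = v ∧ G.t e = v)).card

/-- The number of edges joining two vertices. -/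
def edgesBetween (v w : G.V) : ℕ :=
  (Finset.univ.filter (fun e => (G.s e = v ∧ G.t e = w) ∨ (G.s e = w ∧ G.t e = v))).card

/-- The first Betti number `b₁(G) = |E| - |V| + 1` (of a connected graph). -/
def b1 : ℤ := (Fintype.card G.E : ℤ) - (Fintype.card G.V : ℤ) + 1

/-- The boundary map `∂ : C₁(G,ℤ) → C₀(G,ℤ)`, sending an edge `e` to `t e - s e`. -/
def boundaryHom : (G.E → ℤ) →+ (G.V → ℤ) where
  toFun c := fun v =>
    ∑ e : G.E, c e * ((if G.t e = v then 1 else 0) - (if G.s e = v then 1 else 0))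
  map_zero' := by funext v; simp
  map_add' a b := by
    funext v
    simp [Pi.add_apply, add_mul, Finset.sum_add_distrib]

/-- The coboundary map `δ : C₀(G,ℤ) → C₁(G,ℤ)`. -/
def coboundaryHom : (G.V → ℤ) →+ (G.E → ℤ) where
  toFun f := fun e => f (G.t e) - f (G.s e)
  map_zero' := by funext e; simp
  map_add' a b := by funext e; simp only [Pi.add_apply]; ring

/-- The cycle space `H₁(G,ℤ)`, i.e. the kernel of the boundary map. -/
def cycleSpace : AddSubgroup (G.E → ℤ) := (G.boundaryHom).ker

/-- `C` is the edge set of a closed walk with no repeated vertices except the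
initial/terminal one (so a loop is a cycle). -/
def IsCycle (C : Finset G.E) : Prop :=
  ∃ n : ℕ, 0 < n ∧ ∃ (e : Fin n → G.E) (v : Fin (n + 1) → G.V),
    Function.Injective e ∧
    (∀ i : Fin n, (G.s (e i) = v i.castSucc ∧ G.t (e i) = v i.succ) ∨
        (G.s (e i) = v i.succ ∧ G.t (e i) = v i.castSucc)) ∧
    v 0 = v (Fin.last n) ∧
    (∀ i j : Fin (n + 1), v i = v j →
        i = j ∨ (i = 0 ∧ j = Fin.last n) ∨ (i = Fin.last n ∧ j = 0)) ∧
    C = Finset.image e Finset.univ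

/-- A bridge (separating edge) is an edge contained in no cycle. -/
def IsBridge (e : G.E) : Prop := ∀ C : Finset G.E, G.IsCycle C → e ∉ C

def Bridgeless : Prop := ∀ e : G.E, ¬ G.IsBridge e

/-- `e₁ ∼ e₂` iff every cycle containing `e₁` contains `e₂` and conversely. -/
def Sim (e₁ e₂ : G.E) : Prop :=
  ∀ C : Finset G.E, G.IsCycle C → (e₁ ∈ C ↔ e₂ ∈ C)

/-- The C1-sets: the equivalence classes of the relation `Sim`. -/
def IsC1Set (S : Set G.E) : Prop := ∃ e : G.E, S = {e' | G.Sim e e'}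

/-- The multigraph obtained by contracting every edge in `F` (a contracted loop is
simply deleted). -/
noncomputable def contractSet (F : Set G.E) : Multigraph :=
  letI : DecidableEq (Quot (fun a b : G.V => ∃ e ∈ F, G.s e = a ∧ G.t e = b)) :=
    Classical.decEq _
  { V := Quot (fun a b : G.V => ∃ e ∈ F, G.s e = a ∧ G.t e = b)
    E := {e : G.E // e ∉ F}
    fV := Fintype.ofSurjective (Quot.mk _) (fun q => Quot.exists_rep q)
    fE := Fintype.ofInjective (Subtype.val) Subtype.val_injective
    dV := inferInstance
    dE := inferInstance
    s := fun e => Quot.mk _ (G.s e.1)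
    t := fun e => Quot.mk _ (G.t e.1) }

/-- `G^(2)`: the multigraph obtained from `G` by contracting every bridge. -/
noncomputable def contractBridges : Multigraph := G.contractSet {e | G.IsBridge e}

/-- An isomorphism of multigraphs. -/
structure Iso (G₁ G₂ : Multigraph) where
  vEquiv : G₁.V ≃ G₂.V
  eEquiv : G₁.E ≃ G₂.E
  endpoints : ∀ e : G₁.E,
    (G₂.s (eEquiv e) = vEquiv (G₁.s e) ∧ G₂.t (eEquiv e) = vEquiv (G₁.t e)) ∨
    (G₂.s (eEquiv e) = vEquiv (G₁.t e) ∧ G₂.t (eEquiv e) = vEquiv (G₁.s e))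

/-- The group of degree-zero divisors `Div⁰(G)`. -/
def Div0 : AddSubgroup (G.V → ℤ) where
  carrier := {D : G.V → ℤ | ∑ v : G.V, D v = 0}
  zero_mem' := by simp
  add_mem' := by
    intro a b ha hb
    simp only [Set.mem_setOf_eq, Pi.add_apply] at *
    simp [Finset.sum_add_distrib, ha, hb]
  neg_mem' := by
    intro a ha
    simp only [Set.mem_setOf_eq, Pi.neg_apply] at *
    simp [ha]

/-- The principal divisor `div(f_v)` associated to a vertex `v`. -/
def prinDiv (v : G.V) : G.V → ℤ :=
  fun u => if u = v then 2 * (G.loops v : ℤ) - (G.val v : ℤ) else (G.edgesBetween v u : ℤ)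

/-- The group of principal divisors `Prin(G)`. -/
def Prin : AddSubgroup (G.V → ℤ) := AddSubgroup.closure (Set.range G.prinDiv)

end Multigraph

/-- `Jac(G₁) ≅ Jac(G₂)`: a ℤ-linear isomorphism of the cycle lattices preserving the
bilinear forms for which the edges are orthonormal. -/
def JacIsoGraph (G₁ G₂ : Multigraph) : Prop :=
  ∃ φ : G₁.cycleSpace ≃+ G₂.cycleSpace,
    ∀ x y : G₁.cycleSpace,
      (∑ e : G₂.E, ((φ x : G₂.E → ℤ) e) * ((φ y : G₂.E → ℤ) e)) =
      ∑ e : G₁.E, ((x : G₁.E → ℤ) e) * ((y : G₁.E → ℤ) e)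

/-- Cyclic equivalence of two multigraphs: a bijection of the edge sets, together with
signs, inducing an isomorphism of the cycle spaces. -/
def CyclicallyEquivalent (G₁ G₂ : Multigraph) : Prop :=
  ∃ (σ : G₁.E ≃ G₂.E) (ε : G₁.E → ℤ),
    (∀ e, ε e = 1 ∨ ε e = -1) ∧
    ((fun x : G₁.E → ℤ => fun e₂ : G₂.E => ε (σ.symm e₂) * x (σ.symm e₂)) ''
        (G₁.cycleSpace : Set (G₁.E → ℤ))) = (G₂.cycleSpace : Set (G₂.E → ℤ))

/-- Cyclic equivalence of metric graphs: as for graphs, with a length-preserving bijection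
of the edge sets. -/
def MetricCycEquiv (G₁ : Multigraph) (ℓ₁ : G₁.E → ℝ) (G₂ : Multigraph) (ℓ₂ : G₂.E → ℝ) : Prop :=
  ∃ (σ : G₁.E ≃ G₂.E) (ε : G₁.E → ℤ),
    (∀ e, ℓ₂ (σ e) = ℓ₁ e) ∧
    (∀ e, ε e = 1 ∨ ε e = -1) ∧
    ((fun x : G₁.E → ℤ => fun e₂ : G₂.E => ε (σ.symm e₂) * x (σ.symm e₂)) ''
        (G₁.cycleSpace : Set (G₁.E → ℤ))) = (G₂.cycleSpace : Set (G₂.E → ℤ))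

/-- `c` chooses one representative edge in each C1-set (i.e. in each `Sim`-class). -/
def IsC1Choice (H : Multigraph) (c : H.E → H.E) : Prop :=
  (∀ e, H.Sim e (c e)) ∧ ∀ e e' : H.E, H.Sim e e' → c e = c e'

/-- The graph `G^(3)` obtained by contracting, in each C1-set, all edges except the
chosen one. -/
noncomputable def threeGraph (H : Multigraph) (c : H.E → H.E) : Multigraph :=
  H.contractSet {e | c e ≠ e}

/-- The length function on `G^(3)`: a surviving edge gets the total length of its C1-set. -/
noncomputable def threeLength (H : Multigraph) (ℓ : H.E → ℝ) (c : H.E → H.E) :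
    (threeGraph H c).E → ℝ :=
  fun e => ∑ e' ∈ Finset.univ.filter (fun e' => c e' = e.1), ℓ e'

/-- A weighted graph: a multigraph with a weight function on the vertices. -/
structure WeightedGraph where
  G : Multigraph
  w : G.V → ℕ

namespace WeightedGraph

/-- The genus `g(G,w) = b₁(G) + Σ_v w(v)`. -/
def genus (X : WeightedGraph) : ℤ := X.G.b1 + ∑ v : X.G.V, (X.w v : ℤ)

/-- A weighted graph is stable if it is connected, has genus at least 2, and every
vertex of weight zero has valency at least 3. -/
def Stable (X : WeightedGraph) : Prop :=
  X.G.Connected ∧ 2 ≤ X.genus ∧ ∀ v : X.G.V, X.w v = 0 → 3 ≤ X.G.val v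

/-- An isomorphism of weighted graphs. -/
structure Iso (X Y : WeightedGraph) where
  vEquiv : X.G.V ≃ Y.G.V
  eEquiv : X.G.E ≃ Y.G.E
  endpoints : ∀ e : X.G.E,
    (Y.G.s (eEquiv e) = vEquiv (X.G.s e) ∧ Y.G.t (eEquiv e) = vEquiv (X.G.t e)) ∨
    (Y.G.s (eEquiv e) = vEquiv (X.G.t e) ∧ Y.G.t (eEquiv e) = vEquiv (X.G.s e))
  weight_eq : ∀ v : X.G.V, Y.w (vEquiv v) = X.w v

/-- Contraction of a single edge of a weighted graph: a non-loop edge is contracted by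
identifying its two endpoints, the new vertex receiving the sum of the two weights;
a loop is deleted, the weight of its base vertex increasing by 1. -/
noncomputable def contract (X : WeightedGraph) (e₀ : X.G.E) : WeightedGraph :=
  letI : DecidableEq (Quot (fun a b : X.G.V => a = X.G.s e₀ ∧ b = X.G.t e₀)) :=
    Classical.decEq _
  { G := { V := Quot (fun a b : X.G.V => a = X.G.s e₀ ∧ b = X.G.t e₀)
           E := {e : X.G.E // e ≠ e₀}
           fV := Fintype.ofSurjective (Quot.mk _) (fun q => Quot.exists_rep q)
           fE := inferInstance
           dV := inferInstance
           dE := inferInstance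
           s := fun e => Quot.mk _ (X.G.s e.1)
           t := fun e => Quot.mk _ (X.G.t e.1) }
    w := fun q =>
      (∑ v ∈ Finset.univ.filter
          (fun v => Quot.mk (fun a b : X.G.V => a = X.G.s e₀ ∧ b = X.G.t e₀) v = q), X.w v) +
      (if X.G.s e₀ = X.G.t e₀ ∧
          Quot.mk (fun a b : X.G.V => a = X.G.s e₀ ∧ b = X.G.t e₀) (X.G.s e₀) = q
       then 1 else 0) }

/-- One step: `Y` is (isomorphic to) the contraction of a single edge of `X`. -/
def ContractStep (X Y : WeightedGraph) : Prop :=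
  ∃ e : X.G.E, Nonempty ((X.contract e).Iso Y)

/-- `X.ContractsTo Y`: `Y` is obtained from `X` by contracting finitely many edges. -/
def ContractsTo : WeightedGraph → WeightedGraph → Prop :=
  Relation.ReflTransGen ContractStep

/-- A sequence of exactly `n` loop contractions from `X` ending at (a graph isomorphic
to) `Y`. -/
def LoopContractSeq : ℕ → WeightedGraph → WeightedGraph → Prop
  | 0, X, Y => Nonempty (X.Iso Y)
  | n + 1, X, Y => ∃ e : X.G.E, X.G.s e = X.G.t e ∧ LoopContractSeq n (X.contract e) Y

/-- The weightless graph `G''` obtained by replacing each vertex `v` of positive weight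
with a weight-zero vertex carrying `w v` new loops. -/
def blowUp (X : WeightedGraph) : WeightedGraph where
  G := { V := X.G.V
         E := X.G.E ⊕ (Σ v : X.G.V, Fin (X.w v))
         fV := inferInstance
         fE := inferInstance
         dV := inferInstance
         dE := inferInstance
         s := Sum.elim X.G.s (fun p => p.1)
         t := Sum.elim X.G.t (fun p => p.1) }
  w := fun _ => 0

def totalWeight (X : WeightedGraph) : ℕ := ∑ v : X.G.V, X.w v

/-- The lattice `Λ = H₁(G,ℤ) ⊕ ℤ^(g - b₁(G))` underlying the Jacobian torus of a
weighted graph. -/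
abbrev JacLattice (X : WeightedGraph) : Type :=
  ↥X.G.cycleSpace × (Fin X.totalWeight → ℤ)

/-- The bilinear form on the Jacobian lattice: on `H₁(G,ℤ)` the edges are orthonormal,
and the form vanishes on the extra summand. -/
def jacForm (X : WeightedGraph) (p q : X.JacLattice) : ℤ :=
  ∑ e : X.G.E, (p.1 : X.G.E → ℤ) e * (q.1 : X.G.E → ℤ) e

end WeightedGraph

/-- A pure tropical curve: a multigraph with positive edge lengths. -/
structure PureTropicalCurve where
  G : Multigraph
  ℓ : G.E → ℝ
  pos : ∀ e, 0 < ℓ e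

/-- A (weighted) tropical curve: a multigraph with vertex weights and positive edge
lengths. -/
structure TropicalCurve where
  G : Multigraph
  w : G.V → ℕ
  ℓ : G.E → ℝ
  pos : ∀ e, 0 < ℓ e

namespace TropicalCurve

def totalWeight (Γ : TropicalCurve) : ℕ := ∑ v : Γ.G.V, Γ.w v

/-- The lattice `Λ = H₁(G,ℤ) ⊕ ℤ^(g - b₁(G))` underlying `Jac(Γ)`. -/
abbrev JacLattice (Γ : TropicalCurve) : Type :=
  ↥Γ.G.cycleSpace × (Fin Γ.totalWeight → ℤ)

/-- The bilinear form `( , )_ℓ` on the Jacobian lattice, vanishing on the extra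
summand. -/
noncomputable def jacForm (Γ : TropicalCurve) (p q : Γ.JacLattice) : ℝ :=
  ∑ e : Γ.G.E, Γ.ℓ e * ((p.1 : Γ.G.E → ℤ) e : ℝ) * ((q.1 : Γ.G.E → ℤ) e : ℝ)

end TropicalCurve

/-- `Jac(Γ₁) ≅ Jac(Γ₂)`: a ℤ-linear isomorphism of the lattices preserving the bilinear
forms. -/
def TropJacIso (Γ₁ Γ₂ : TropicalCurve) : Prop :=
  ∃ φ : Γ₁.JacLattice ≃+ Γ₂.JacLattice,
    ∀ p q : Γ₁.JacLattice, Γ₂.jacForm (φ p) (φ q) = Γ₁.jacForm p q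

namespace Multigraph

variable {G : Multigraph}

/-- The mod 2 boundary of an edge. -/
noncomputable def boundaryTwo (G : Multigraph) (e : G.E) : G.V →₀ ZMod 2 :=
  Finsupp.single (G.s e) 1 + Finsupp.single (G.t e) 1

/-- An edge set is even if every vertex has even valency in it. -/
def IsEven (G : Multigraph) (D : Finset G.E) : Prop := ∑ e ∈ D, G.boundaryTwo e = 0

/-- The edge `e` joins `a` and `b`. -/
def Joins (G : Multigraph) (e : G.E) (a b : G.V) : Prop :=
  (G.s e = a ∧ G.t e = b) ∨ (G.s e = b ∧ G.t e = a)

theorem Joins.boundaryTwo_eq {e : G.E} {a b : G.V} (h : G.Joins e a b) :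
    G.boundaryTwo e = Finsupp.single a 1 + Finsupp.single b 1 := by
  rcases h with ⟨rfl, rfl⟩ | ⟨rfl, rfl⟩
  · rfl
  · exact add_comm _ _

theorem isEven_empty : G.IsEven ∅ := Finset.sum_empty

theorem IsEven.sdiff {C D : Finset G.E} (hD : G.IsEven D) (hC : G.IsEven C) (h : C ⊆ D) :
    G.IsEven (D \ C) := by
  have := Finset.sum_sdiff (f := G.boundaryTwo) h
  rw [hC, hD, add_zero] at this
  exact this

theorem IsCycle.nonempty {C : Finset G.E} (h : G.IsCycle C) : C.Nonempty := by
  obtain ⟨n, hn, e, v, -, -, -, -, rfl⟩ := h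
  exact ⟨e ⟨0, hn⟩, by simp⟩

theorem IsCycle.isEven {C : Finset G.E} (h : G.IsCycle C) : G.IsEven C := by
  obtain ⟨n, hn, e, v, he, hj, h0, -, rfl⟩ := h
  unfold IsEven
  rw [Finset.sum_image he.injOn,
    Finset.sum_congr rfl fun i _ => Joins.boundaryTwo_eq (hj i), Finset.sum_add_distrib]
  have h1 := Fin.sum_univ_succ fun i => Finsupp.single (v i) (1 : ZMod 2)
  rw [Fin.sum_univ_castSucc, h0, add_comm, add_right_inj] at h1
  rw [h1, ZModModule.add_self]

/-- A nonempty even subset of a cycle is the whole cycle. -/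
theorem IsCycle.eq_of_subset {C D : Finset G.E} (h : G.IsCycle C) (hD : G.IsEven D)
    (hDC : D ⊆ C) (hne : D.Nonempty) : D = C := by
  obtain ⟨n, hn, e, v, he, hj, h0, hv, rfl⟩ := h
  have hstep : ∀ i j : Fin n, (i : ℕ) + 1 = j → (e i ∈ D ↔ e j ∈ D) := by
    intro i j hij
    have hsum : ∑ k : Fin n, (if e k ∈ D then G.boundaryTwo (e k) else 0) = 0 := by
      rw [← Finset.sum_image (f := fun a => if a ∈ D then G.boundaryTwo a else 0)
        he.injOn, ← Finset.sum_filter,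
        Finset.filter_mem_eq_inter, Finset.inter_eq_right.2 hDC]
      exact hD
    have hval := DFunLike.congr_fun hsum (v j.castSucc)
    have hterm : ∀ k : Fin n, (if e k ∈ D then G.boundaryTwo (e k) else 0) (v j.castSucc) =
        (if k = i then if e i ∈ D then 1 else 0 else 0) +
          (if k = j then if e j ∈ D then 1 else 0 else 0) := by
      intro k
      have h1 : v k.castSucc = v j.castSucc ↔ k = j := by
        refine ⟨fun h => ?_, fun h => by rw [h]⟩
        have := hv _ _ h
        simp only [Fin.ext_iff, Fin.val_castSucc, Fin.val_zero, Fin.val_last] at this ⊢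
        omega
      have h2 : v k.succ = v j.castSucc ↔ k = i := by
        refine ⟨fun h => ?_, fun h => ?_⟩
        · have := hv _ _ h
          simp only [Fin.ext_iff, Fin.val_castSucc, Fin.val_succ, Fin.val_zero,
            Fin.val_last] at this ⊢
          omega
        · congr 1
          simp only [Fin.ext_iff, Fin.val_castSucc, Fin.val_succ]
          omega
      have hne : i ≠ j := by rintro rfl; omega
      rw [Joins.boundaryTwo_eq (hj k)]
      by_cases hk : e k ∈ D
      · rw [if_pos hk, Finsupp.add_apply, Finsupp.single_apply, Finsupp.single_apply]
        simp only [h1, h2]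
        by_cases hki : k = i
        · subst hki; simp [hk, hne]
        · by_cases hkj : k = j
          · subst hkj; simp [hk, hki]
          · simp [hki, hkj]
      · rw [if_neg hk, Finsupp.zero_apply]
        by_cases hki : k = i
        · subst hki; simp [hk, hne]
        · by_cases hkj : k = j
          · subst hkj; simp [hk, hki]
          · simp [hki, hkj]
    rw [Finsupp.finsetSum_apply, Finset.sum_congr rfl fun k _ => hterm k,
      Finset.sum_add_distrib] at hval
    simp only [Finset.sum_ite_eq', Finset.mem_univ, if_true, Finsupp.zero_apply] at hval
    by_cases h1 : e i ∈ D <;> by_cases h2 : e j ∈ D <;> simp_all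
  have hconst : ∀ (k : ℕ) (hk : k < n), (e ⟨k, hk⟩ ∈ D ↔ e ⟨0, hn⟩ ∈ D) := by
    intro k
    induction k with
    | zero => intro _; rfl
    | succ k ih => intro hk; rw [← hstep ⟨k, by omega⟩ ⟨k + 1, hk⟩ rfl, ih]
  refine Finset.Subset.antisymm hDC fun a ha => ?_
  obtain ⟨b, hb⟩ := hne
  obtain ⟨i, -, rfl⟩ := Finset.mem_image.1 (hDC hb)
  obtain ⟨k, -, rfl⟩ := Finset.mem_image.1 ha
  exact (hconst k k.2).2 ((hconst i i.2).1 hb)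

/-- A non-backtracking infinite walk contains a cycle. -/
theorem exists_isCycle_of_walk {D : Finset G.E} (e : ℕ → G.E) (v : ℕ → G.V)
    (heD : ∀ k, e k ∈ D) (hj : ∀ k, G.Joins (e k) (v k) (v (k + 1)))
    (hne : ∀ k, e (k + 1) ≠ e k) : ∃ C ⊆ D, G.IsCycle C := by
  classical
  have hex : ∃ j, ∃ i, i < j ∧ v i = v j := by
    obtain ⟨a, b, hab, h⟩ := Finite.exists_ne_map_eq_of_infinite v
    rcases lt_or_gt_of_ne hab with h' | h'
    exacts [⟨b, a, h', h⟩, ⟨a, b, h', h.symm⟩]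
  obtain ⟨i, hij, hvij⟩ := Nat.find_spec hex
  set j := Nat.find hex
  have hmin : ∀ a b, a < b → b < j → v a ≠ v b := fun a b hab hb h =>
    Nat.find_min hex hb ⟨a, hab, h⟩
  have hinj : ∀ a b, a < b → b < j → e a ≠ e b := by
    intro a b hab hb h
    have h1 := hj a
    have h2 := hj b
    rw [h] at h1
    have hvab := hmin a b hab hb
    have hv1 : v (a + 1) = v b := by
      unfold Joins at h1 h2
      grind
    rcases Nat.lt_or_ge (a + 1) b with h3 | h3
    · exact hmin _ _ h3 hb hv1
    · obtain rfl : b = a + 1 := by omega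
      exact hne a h.symm
  obtain ⟨n, hn⟩ : ∃ n, j = i + n := ⟨j - i, by omega⟩
  refine ⟨Finset.image (fun k : Fin n => e (i + k)) Finset.univ, ?_, n, by omega,
    fun k => e (i + k), fun k => v (i + k), ?_, ?_, ?_, ?_, rfl⟩
  · intro a ha
    obtain ⟨k, -, rfl⟩ := Finset.mem_image.1 ha
    exact heD _
  · intro a b h
    rcases lt_trichotomy a b with hab | hab | hab
    · exact absurd h (hinj _ _ (by omega) (by omega))
    · exact hab
    · exact absurd h.symm (hinj _ _ (by omega) (by omega))
  · intro k
    exact hj (i + k)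
  · simpa [← hn] using hvij
  · have key : ∀ a b : Fin (n + 1), a < b → v (i + a) = v (i + b) →
        a = 0 ∧ b = Fin.last n := by
      intro a b hab h
      have hb : (b : ℕ) = n := by
        by_contra hb
        exact hmin _ _ (by omega) (by omega) h
      have ha : (a : ℕ) = 0 := by
        by_contra ha
        refine hmin i (i + a) (by omega) (by omega) ?_
        rw [hvij, h, hb, hn]
      exact ⟨Fin.ext ha, Fin.ext hb⟩
    intro a b h
    rcases lt_trichotomy a b with hab | hab | hab
    · exact Or.inr (Or.inl (key a b hab h))
    · exact Or.inl hab
    · exact Or.inr (Or.inr (key b a hab h.symm).symm)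

/-- In an even set, an edge with odd incidence at `w` is followed there by another such edge. -/
theorem IsEven.exists_next {D : Finset G.E} (hD : G.IsEven D) {e : G.E} {w : G.V} (he : e ∈ D)
    (hw : G.boundaryTwo e w ≠ 0) :
    ∃ e' ∈ D, ∃ w', e' ≠ e ∧ G.Joins e' w w' ∧ G.boundaryTwo e' w' ≠ 0 := by
  obtain ⟨e', he', hne, hw'⟩ : ∃ e' ∈ D, e' ≠ e ∧ G.boundaryTwo e' w ≠ 0 := by
    by_contra! hcon
    have h := DFunLike.congr_fun hD w
    rw [Finsupp.finsetSum_apply, Finset.sum_eq_single_of_mem e he hcon] at h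
    exact hw h
  obtain ⟨w', hj⟩ : ∃ w', G.Joins e' w w' := by
    by_contra! hcon
    simp only [Joins, not_or, not_and] at hcon
    have h1 : G.s e' ≠ w := fun h => (hcon (G.t e')).1 h rfl
    have h2 : G.t e' ≠ w := fun h => (hcon (G.s e')).2 rfl h
    exact hw' (by simp [boundaryTwo, h1, h2])
  refine ⟨e', he', w', hne, hj, ?_⟩
  rw [hj.boundaryTwo_eq] at hw' ⊢
  have hww : w ≠ w' := by
    rintro rfl
    exact hw' (by rw [ZModModule.add_self, Finsupp.zero_apply])
  simp [hww]

theorem isCycle_singleton_of_loop {e : G.E} (h : G.s e = G.t e) : G.IsCycle {e} := by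
  refine ⟨1, one_pos, fun _ => e, fun _ => G.s e, Function.injective_of_subsingleton _,
    fun _ => Or.inl ⟨rfl, h.symm⟩, rfl, ?_, by simp⟩
  intro i j _
  simp only [Fin.ext_iff, Fin.val_zero, Fin.val_last]
  omega

theorem IsEven.exists_isCycle {D : Finset G.E} (hD : G.IsEven D) (hne : D.Nonempty) :
    ∃ C ⊆ D, G.IsCycle C := by
  obtain ⟨e₀, he₀⟩ := hne
  by_cases hl : G.s e₀ = G.t e₀
  · exact ⟨{e₀}, by simpa using he₀, isCycle_singleton_of_loop hl⟩
  let P := {p : G.E × G.V // p.1 ∈ D ∧ G.boundaryTwo p.1 p.2 ≠ 0}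
  have hnext : ∀ p : P, ∃ q : P, q.1.1 ≠ p.1.1 ∧ G.Joins q.1.1 p.1.2 q.1.2 := by
    rintro ⟨⟨e, w⟩, he, hw⟩
    obtain ⟨e', he', w', h1, h2, h3⟩ := hD.exists_next he hw
    exact ⟨⟨⟨e', w'⟩, he', h3⟩, h1, h2⟩
  choose next hnext_ne hnext_joins using hnext
  let p₀ : P := ⟨⟨e₀, G.t e₀⟩, he₀, by simp [boundaryTwo, hl]⟩
  let p : ℕ → P := fun k => next^[k] p₀
  have hp : ∀ k, p (k + 1) = next (p k) := fun k => Function.iterate_succ_apply' next k p₀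
  refine exists_isCycle_of_walk (fun k => (p (k + 1)).1.1) (fun k => (p k).1.2)
    (fun k => (p (k + 1)).2.1) (fun k => ?_) (fun k => ?_)
  · rw [hp]
    exact hnext_joins _
  · rw [hp (k + 1)]
    exact hnext_ne _

/-- Cycles are exactly the minimal nonempty even edge sets. -/
theorem isCycle_iff {C : Finset G.E} :
    G.IsCycle C ↔ G.IsEven C ∧ C.Nonempty ∧
      ∀ D ⊆ C, G.IsEven D → D.Nonempty → D = C := by
  refine ⟨fun h => ⟨h.isEven, h.nonempty, fun D hDC hD hne => h.eq_of_subset hD hDC hne⟩, ?_⟩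
  rintro ⟨hC, hne, hmin⟩
  obtain ⟨D, hDC, hD⟩ := hC.exists_isCycle hne
  rwa [← hmin D hDC hD.isEven hD.nonempty]

theorem Sim.mem_iff_of_isEven {e e' : G.E} (h : G.Sim e e') {D : Finset G.E}
    (hD : G.IsEven D) : e ∈ D ↔ e' ∈ D := by
  induction D using Finset.strongInduction with
  | H D ih =>
    rcases D.eq_empty_or_nonempty with rfl | hne
    · simp
    obtain ⟨C, hCD, hC⟩ := hD.exists_isCycle hne
    have h1 := h C hC
    have h2 := ih (D \ C) (Finset.sdiff_ssubset hCD hC.nonempty) (hD.sdiff hC.isEven hCD)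
    simp only [Finset.mem_sdiff] at h2
    have := @hCD e
    have := @hCD e'
    tauto

/-- The edges of a contraction that belong to a given edge set of the original graph. -/
noncomputable def surviving (F : Set G.E) (D : Finset G.E) : Finset (G.contractSet F).E :=
  Finset.univ.filter fun e => e.1 ∈ D

theorem mem_surviving {F : Set G.E} {D : Finset G.E} {e : (G.contractSet F).E} :
    e ∈ surviving F D ↔ e.1 ∈ D := by
  simp [surviving]

/-- The projection of vertices to the contraction. -/
def contractMap (F : Set G.E) (v : G.V) : (G.contractSet F).V := Quot.mk _ v

/-- A representative in `G` of each vertex of the contraction. -/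
noncomputable def contractRep (F : Set G.E) (q : (G.contractSet F).V) : G.V := Quot.out q

/-- The inclusion of the edges of the contraction. -/
def contractEdge (F : Set G.E) (e : (G.contractSet F).E) : G.E := e.1

theorem sum_boundaryTwo_surviving (F : Set G.E) (D : Finset G.E) :
    ∑ e ∈ surviving F D, (G.contractSet F).boundaryTwo e =
      Finsupp.mapDomain (contractMap F) (∑ e ∈ D, G.boundaryTwo e) := by
  classical
  have hmap : ∀ e, Finsupp.mapDomain (contractMap F) (G.boundaryTwo e) =
      Finsupp.single (contractMap F (G.s e)) 1 + Finsupp.single (contractMap F (G.t e)) 1 := by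
    intro e
    rw [boundaryTwo, Finsupp.mapDomain_add, Finsupp.mapDomain_single, Finsupp.mapDomain_single]
  rw [Finsupp.mapDomain_finsetSum]
  refine Finset.sum_of_injOn Subtype.val Subtype.val_injective.injOn ?_ ?_ ?_
  · intro e he
    exact mem_surviving.1 he
  · intro e he hne
    have heF : e ∈ F := by
      by_contra heF
      exact hne ⟨⟨e, heF⟩, mem_surviving.2 he, rfl⟩
    have : contractMap F (G.s e) = contractMap F (G.t e) := Quot.sound ⟨e, heF, rfl, rfl⟩
    rw [hmap, this, ZModModule.add_self]
  · intro e _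
    rw [hmap]
    rfl

/-- A vertex chain that vanishes in the contraction is the boundary of contracted edges. -/
theorem exists_sum_boundaryTwo_eq {F : Set G.E} {d : G.V →₀ ZMod 2}
    (hd : Finsupp.mapDomain (contractMap F) d = 0) :
    ∃ Z : Finset G.E, (∀ e ∈ Z, e ∈ F) ∧ ∑ e ∈ Z, G.boundaryTwo e = d := by
  classical
  set S := Submodule.span (ZMod 2) (G.boundaryTwo '' F) with hS
  have hgen : ∀ v w : G.V, Relation.EqvGen (fun a b => ∃ e ∈ F, G.s e = a ∧ G.t e = b) v w →
      Finsupp.single v (1 : ZMod 2) - Finsupp.single w 1 ∈ S := by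
    intro v w h
    induction h with
    | rel a b h =>
      obtain ⟨e, he, rfl, rfl⟩ := h
      rw [ZModModule.sub_eq_add]
      exact Submodule.subset_span ⟨e, he, rfl⟩
    | refl a => simp
    | symm a b _ ih => rw [← neg_sub]; exact S.neg_mem ih
    | trans a b c _ _ h1 h2 => simpa using S.add_mem h1 h2
  have hmem : ∀ d : G.V →₀ ZMod 2,
      d - Finsupp.mapDomain (contractRep F) (Finsupp.mapDomain (contractMap F) d) ∈ S := by
    intro d
    induction d using Finsupp.induction_linear with
    | zero => simp only [Finsupp.mapDomain_zero, sub_zero, S.zero_mem]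
    | add f g hf hg =>
      rw [Finsupp.mapDomain_add, Finsupp.mapDomain_add, add_sub_add_comm]
      exact S.add_mem hf hg
    | single v a =>
      rw [Finsupp.mapDomain_single, Finsupp.mapDomain_single]
      have := S.smul_mem a (hgen v (contractRep F (contractMap F v))
        (Quot.eqvGen_exact (Quot.out_eq _).symm))
      simpa [smul_sub] using this
  have hdS := hmem d
  rw [hd, Finsupp.mapDomain_zero, sub_zero, hS,
    Finsupp.mem_span_image_iff_linearCombination] at hdS
  obtain ⟨l, hl, rfl⟩ := hdS
  refine ⟨l.support, fun e he => (Finsupp.mem_supported _ _).1 hl he, ?_⟩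
  rw [Finsupp.linearCombination_apply, Finsupp.sum]
  refine Finset.sum_congr rfl fun e he => ?_
  have : ∀ x : ZMod 2, x ≠ 0 → x = 1 := by decide
  rw [this _ (Finsupp.mem_support_iff.1 he), one_smul]

theorem IsEven.surviving {D : Finset G.E} (hD : G.IsEven D) (F : Set G.E) :
    (G.contractSet F).IsEven (surviving F D) := by
  rw [IsEven, sum_boundaryTwo_surviving, hD, Finsupp.mapDomain_zero]

/-- Every even edge set of a contraction lifts to an even edge set. -/
theorem exists_isEven_surviving_eq {F : Set G.E} {D' : Finset (G.contractSet F).E}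
    (hD' : (G.contractSet F).IsEven D') : ∃ D, G.IsEven D ∧ surviving F D = D' := by
  classical
  set D₀ : Finset G.E := D'.image (contractEdge F) with hD₀
  have hs : Multigraph.surviving F D₀ = D' := by
    ext e
    rw [mem_surviving, hD₀, Finset.mem_image]
    exact ⟨fun ⟨a, ha, h⟩ => Subtype.ext h ▸ ha, fun h => ⟨e, h, rfl⟩⟩
  have h0 := sum_boundaryTwo_surviving F D₀
  rw [hs, hD'] at h0
  obtain ⟨Z, hZF, hZ⟩ := exists_sum_boundaryTwo_eq h0.symm
  have hdisj : Disjoint D₀ Z := by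
    rw [Finset.disjoint_left]
    intro e he heZ
    obtain ⟨a, -, rfl⟩ := Finset.mem_image.1 he
    exact a.2 (hZF _ heZ)
  refine ⟨D₀ ∪ Z, ?_, ?_⟩
  · rw [IsEven, Finset.sum_union hdisj, hZ, ZModModule.add_self]
  · rw [← hs]
    ext e
    rw [mem_surviving, mem_surviving, Finset.mem_union]
    exact or_iff_left fun h => e.2 (hZF _ h)

end Multigraph

theorem IsC1Choice.apply_apply {G : Multigraph} {c : G.E → G.E} (hch : IsC1Choice G c)
    (e : G.E) : c (c e) = c e :=
  (hch.2 _ _ (hch.1 e)).symm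

/-- An even edge set is determined, compatibly with inclusion, by its chosen edges. -/
theorem IsC1Choice.subset_of_surviving_subset {G : Multigraph} {c : G.E → G.E}
    (hch : IsC1Choice G c) {D₁ D₂ : Finset G.E} (h₁ : G.IsEven D₁) (h₂ : G.IsEven D₂)
    (h : Multigraph.surviving {e | c e ≠ e} D₁ ⊆ Multigraph.surviving {e | c e ≠ e} D₂) :
    D₁ ⊆ D₂ := by
  intro e he
  rw [(hch.1 e).mem_iff_of_isEven h₁] at he
  rw [(hch.1 e).mem_iff_of_isEven h₂]
  have hce : c e ∉ {e | c e ≠ e} := fun h => h (hch.apply_apply e)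
  exact Multigraph.mem_surviving.1 (@h ⟨c e, hce⟩ (Multigraph.mem_surviving.2 he))

/-- An even edge set is a cycle iff its chosen edges form a cycle of the contraction. -/
theorem IsC1Choice.isCycle_surviving_iff {G : Multigraph} {c : G.E → G.E}
    (hch : IsC1Choice G c) {D : Finset G.E} (hD : G.IsEven D) :
    (G.contractSet {e | c e ≠ e}).IsCycle (Multigraph.surviving {e | c e ≠ e} D) ↔
      G.IsCycle D := by
  have hmono : ∀ {A B : Finset G.E}, A ⊆ B →
      Multigraph.surviving {e | c e ≠ e} A ⊆ Multigraph.surviving {e | c e ≠ e} B :=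
    fun h e he => Multigraph.mem_surviving.2 (h (Multigraph.mem_surviving.1 he))
  have hne : ∀ {A : Finset G.E}, G.IsEven A →
      ((Multigraph.surviving {e | c e ≠ e} A).Nonempty ↔ A.Nonempty) := by
    intro A hA
    refine ⟨fun ⟨e, he⟩ => ⟨e.1, Multigraph.mem_surviving.1 he⟩, fun h => ?_⟩
    rw [Finset.nonempty_iff_ne_empty] at h ⊢
    intro h0
    refine h (Finset.subset_empty.1 (hch.subset_of_surviving_subset hA
      Multigraph.isEven_empty ?_))
    rw [h0]
    exact Finset.empty_subset _
  rw [Multigraph.isCycle_iff, Multigraph.isCycle_iff]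
  constructor
  · rintro ⟨-, h1, h2⟩
    refine ⟨hD, (hne hD).1 h1, fun A hAD hA hA0 => ?_⟩
    have := h2 _ (hmono hAD) (hA.surviving _) ((hne hA).2 hA0)
    exact hAD.antisymm (hch.subset_of_surviving_subset hD hA this.ge)
  · rintro ⟨-, h1, h2⟩
    refine ⟨hD.surviving _, (hne hD).2 h1, fun A' hAD hA' hA0 => ?_⟩
    obtain ⟨A, hA, rfl⟩ := Multigraph.exists_isEven_surviving_eq hA'
    rw [h2 A (hch.subset_of_surviving_subset hA hD hAD) hA ((hne hA).1 hA0)]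

/-- For a connected bridgeless multigraph `G` with a choice of one edge in
each C1-set, no cycle of `G` is collapsed to a vertex in `G^(3)`, and sending a cycle
`C` of `G` to its set of surviving edges is a bijection from the cycles of `G` onto
the cycles of `G^(3)`. -/
theorem three_graph_cycles_bijection (G : Multigraph) (hc : G.Connected)
    (hb : G.Bridgeless) (c : G.E → G.E) (hch : IsC1Choice G c) :
    (∀ C : Finset G.E, G.IsCycle C → ∃ e ∈ C, c e = e) ∧
    Set.BijOn
      (fun C : Finset G.E =>
        Finset.univ.filter (fun e : (threeGraph G c).E => e.1 ∈ C))
      {C : Finset G.E | G.IsCycle C}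
      {C' : Finset (threeGraph G c).E | (threeGraph G c).IsCycle C'} := by
  refine ⟨fun C hC => ?_, ?_, ?_, ?_⟩
  · obtain ⟨e, he⟩ := hC.nonempty
    exact ⟨c e, (hch.1 e C hC).1 he, hch.apply_apply e⟩
  · intro C hC
    exact (hch.isCycle_surviving_iff (Multigraph.IsCycle.isEven hC)).2 hC
  · intro C₁ h₁ C₂ h₂ h
    have e₁ := Multigraph.IsCycle.isEven h₁
    have e₂ := Multigraph.IsCycle.isEven h₂
    exact (hch.subset_of_surviving_subset e₁ e₂ (le_of_eq h)).antisymm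
      (hch.subset_of_surviving_subset e₂ e₁ (le_of_eq h.symm))
  · intro C' hC'
    obtain ⟨D, hD, rfl⟩ :=
      Multigraph.exists_isEven_surviving_eq (Multigraph.IsCycle.isEven hC')
    exact ⟨D, (hch.isCycle_surviving_iff hD).1 hC', rfl⟩
end

section
/- Let G be a connected bridgeless multigraph and let e1, e2 be two distinct edges of G. Then the graph G − {e1, e2} obtained by removing e1 and e2 is disconnected if and only if every cycle of G containing e1 contains e2 and every cycle containing e2 contains e1 (i.e., (e1,e2) is a separating pair exactly when e1 ∼ e2). -/
namespace Multigraph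

variable {G : Multigraph}

/-- Two vertices are joined by an edge outside `F`. -/
def AdjAvoiding (G : Multigraph) (F : Set G.E) (x y : G.V) : Prop :=
  ∃ e : G.E, e ∉ F ∧ ((G.s e = x ∧ G.t e = y) ∨ (G.s e = y ∧ G.t e = x))

/-- Two vertices are joined by a walk whose edges lie outside `F`. -/
def ReachAvoiding (G : Multigraph) (F : Set G.E) : G.V → G.V → Prop :=
  Relation.ReflTransGen (G.AdjAvoiding F)

lemma AdjAvoiding.symm {F : Set G.E} {x y : G.V} (h : G.AdjAvoiding F x y) :
    G.AdjAvoiding F y x := by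
  obtain ⟨e, he, h⟩ := h
  exact ⟨e, he, h.symm⟩

lemma ReachAvoiding.symm {F : Set G.E} {x y : G.V} (h : G.ReachAvoiding F x y) :
    G.ReachAvoiding F y x :=
  have : Std.Symm (G.AdjAvoiding F) := ⟨fun _ _ => AdjAvoiding.symm⟩
  Relation.ReflTransGen.stdSymm.symm _ _ h

/-- If the endpoints of `e` are still joined after deleting `e` as well, then deleting `e`
does not change which vertices are joined. -/
lemma ReachAvoiding.insert {F : Set G.E} {e : G.E}
    (he : G.ReachAvoiding (insert e F) (G.s e) (G.t e)) {x y : G.V}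
    (h : G.ReachAvoiding F x y) : G.ReachAvoiding (insert e F) x y := by
  induction h with
  | refl => exact Relation.ReflTransGen.refl
  | tail _ hstep ih =>
    refine ih.trans ?_
    obtain ⟨f, hf, hends⟩ := hstep
    by_cases hfe : f = e
    · subst hfe
      rcases hends with ⟨rfl, rfl⟩ | ⟨rfl, rfl⟩
      · exact he
      · exact he.symm
    · exact Relation.ReflTransGen.single ⟨f, by simp [hfe, hf], hends⟩

/-- The endpoints of an edge of a cycle are joined by the other edges of the cycle. -/
lemma IsCycle.reachAvoiding {C : Finset G.E} (hC : G.IsCycle C) {e : G.E} (he : e ∈ C)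
    {F : Set G.E} (hF : ∀ f ∈ C, f ∈ F → f = e) :
    G.ReachAvoiding F (G.s e) (G.t e) := by
  obtain ⟨n, -, c, v, hinj, hends, hclosed, -, rfl⟩ := hC
  obtain ⟨i, -, rfl⟩ := Finset.mem_image.mp he
  have step (k : Fin n) (hk : k ≠ i) : G.AdjAvoiding F (v k.castSucc) (v k.succ) :=
    ⟨c k, fun h => hk (hinj (hF _ (by simp) h)), hends k⟩
  have before (k : ℕ) (hk : k ≤ i) : G.ReachAvoiding F (v 0) (v ⟨k, by omega⟩) := by
    induction k with
    | zero => exact Relation.ReflTransGen.refl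
    | succ k ih =>
      exact (ih (by omega)).tail (step ⟨k, by omega⟩ (by intro h; simp [← h] at hk))
  have after (k : ℕ) (hk : i + 1 ≤ k) (hkn : k < n + 1) :
      G.ReachAvoiding F (v i.succ) (v ⟨k, hkn⟩) := by
    induction k, hk using Nat.le_induction with
    | base => exact Relation.ReflTransGen.refl
    | succ k hk ih =>
      exact (ih (by omega)).tail (step ⟨k, by omega⟩ (by intro h; simp [← h] at hk))
  have h : G.ReachAvoiding F (v i.succ) (v i.castSucc) := by
    refine (after n (by omega) (by omega)).trans ?_
    have := before i le_rfl
    rw [hclosed] at this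
    exact this
  rcases hends i with ⟨hs, ht⟩ | ⟨hs, ht⟩
  · rw [hs, ht]; exact h.symm
  · rw [hs, ht]; exact h

/-- Joined vertices are joined by a walk without repeated vertices. -/
lemma ReachAvoiding.exists_path {F : Set G.E} {a b : G.V} (h : G.ReachAvoiding F a b) :
    ∃ (n : ℕ) (v : Fin (n + 1) → G.V), Function.Injective v ∧ v 0 = a ∧ v (Fin.last n) = b ∧
      ∀ i : Fin n, G.AdjAvoiding F (v i.castSucc) (v i.succ) := by
  let H : SimpleGraph G.V := SimpleGraph.fromRel (G.AdjAvoiding F)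
  have hr : H.Reachable a b := by
    induction h with
    | refl => exact SimpleGraph.Reachable.refl _
    | @tail x y _ hstep ih =>
      refine ih.trans ?_
      by_cases hxy : x = y
      · rw [hxy]
      · exact SimpleGraph.Adj.reachable ((SimpleGraph.fromRel_adj _ _ _).mpr ⟨hxy, Or.inl hstep⟩)
  obtain ⟨p, hp⟩ := hr.exists_isPath
  refine ⟨p.length, fun i => p.getVert i, ?_, by simp, by simp, ?_⟩
  · intro i j hij
    exact Fin.ext (hp.getVert_injOn (by simp; omega) (by simp; omega) hij)
  · intro i
    obtain ⟨-, h | h⟩ := (SimpleGraph.fromRel_adj _ _ _).mp (p.adj_getVert_succ i.isLt)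
    · exact h
    · exact h.symm

/-- If the endpoints of `e` are joined by edges outside `F`, where `e ∈ F`, then `e` lies on a
cycle all of whose other edges are outside `F`. -/
lemma ReachAvoiding.exists_isCycle {F : Set G.E} {e : G.E} (he : e ∈ F)
    (h : G.ReachAvoiding F (G.s e) (G.t e)) :
    ∃ C : Finset G.E, G.IsCycle C ∧ e ∈ C ∧ ∀ f ∈ C, f ∈ F → f = e := by
  obtain ⟨n, v, hv, h0, hlast, hstep⟩ := h.exists_path
  choose c hcF hends using hstep
  have hc : Function.Injective c := by
    intro i j hij
    have hi := hends i
    have hj := hends j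
    rw [hij] at hi
    have hcases : (v i.castSucc = v j.castSucc) ∨
        (v i.castSucc = v j.succ ∧ v i.succ = v j.castSucc) := by grind
    rcases hcases with h | ⟨h, h'⟩
    · simpa using hv h
    · have h₁ := congrArg Fin.val (hv h)
      have h₂ := congrArg Fin.val (hv h')
      simp at h₁ h₂
      omega
  refine ⟨Finset.image (Fin.snoc c e : Fin (n + 1) → G.E) Finset.univ,
    ⟨n + 1, n.succ_pos, Fin.snoc c e, Fin.snoc v (G.s e), ?_, ?_, ?_, ?_, rfl⟩, ?_, ?_⟩
  · exact Fin.snoc_injective_iff.mpr ⟨hc, by rintro ⟨i, rfl⟩; exact hcF i he⟩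
  · intro i
    induction i using Fin.lastCases with
    | last => right; simp [hlast]
    | cast i =>
      rw [Fin.succ_castSucc]
      simpa only [Fin.snoc_castSucc] using hends i
  · rw [Fin.snoc_last, ← Fin.castSucc_zero, Fin.snoc_castSucc, h0]
  · intro i j hij
    induction i using Fin.lastCases with
    | last =>
      induction j using Fin.lastCases with
      | last => exact Or.inl rfl
      | cast j =>
        rw [Fin.snoc_last, Fin.snoc_castSucc, ← h0] at hij
        exact Or.inr (Or.inr ⟨rfl, by simp [← hv hij]⟩)
    | cast i =>
      induction j using Fin.lastCases with
      | last =>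
        rw [Fin.snoc_last, Fin.snoc_castSucc, ← h0] at hij
        exact Or.inr (Or.inl ⟨by simp [hv hij], rfl⟩)
      | cast j =>
        rw [Fin.snoc_castSucc, Fin.snoc_castSucc] at hij
        exact Or.inl (congrArg _ (hv hij))
  · exact Finset.mem_image.mpr ⟨Fin.last n, Finset.mem_univ _, by simp⟩
  · intro f hf hfF
    obtain ⟨i, -, rfl⟩ := Finset.mem_image.mp hf
    induction i using Fin.lastCases with
    | last => simp
    | cast i =>
      rw [Fin.snoc_castSucc] at hfF
      exact absurd hfF (hcF i)

/-- If some cycle contains `e₁` but not `e₂`, then deleting both edges from a connected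
bridgeless multigraph leaves it connected. -/
lemma IsCycle.connectedAvoiding_pair {C : Finset G.E} (hC : G.IsCycle C) (hc : G.Connected)
    (hb : G.Bridgeless) {e₁ e₂ : G.E} (h₁ : e₁ ∈ C) (h₂ : e₂ ∉ C) :
    G.ConnectedAvoiding {e₁, e₂} := by
  have reach₁ : G.ReachAvoiding {e₁, e₂} (G.s e₁) (G.t e₁) := by
    refine hC.reachAvoiding h₁ ?_
    rintro f hf (rfl | rfl)
    · rfl
    · exact absurd hf h₂
  obtain ⟨D, hD, he₂⟩ : ∃ D, G.IsCycle D ∧ e₂ ∈ D := by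
    simpa [IsBridge] using hb e₂
  have reach₂ : G.ReachAvoiding (insert e₂ ∅) (G.s e₂) (G.t e₂) :=
    hD.reachAvoiding he₂ (by simp)
  intro a b
  have hab : G.ReachAvoiding ∅ a b :=
    Relation.ReflTransGen.mono (fun _ _ ⟨e, he⟩ => ⟨e, Set.notMem_empty e, he⟩) _ _ (hc.2 a b)
  have hab₂ : G.ReachAvoiding {e₂} a b := by simpa using ReachAvoiding.insert reach₂ hab
  exact ReachAvoiding.insert reach₁ hab₂

end Multigraph

/-- In a connected bridgeless multigraph, for distinct edges `e₁, e₂`, the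
graph `G - {e₁,e₂}` is disconnected if and only if every cycle containing `e₁` contains
`e₂` and conversely (i.e. `(e₁,e₂)` is a separating pair exactly when `e₁ ∼ e₂`). -/
theorem separating_pair_iff_sim (G : Multigraph) (hc : G.Connected) (hb : G.Bridgeless)
    (e₁ e₂ : G.E) (hne : e₁ ≠ e₂) :
    ¬ G.ConnectedAvoiding {e₁, e₂} ↔ G.Sim e₁ e₂ := by
  constructor
  · intro hdisc C hC
    constructor
    · intro h₁
      by_contra h₂
      exact hdisc (hC.connectedAvoiding_pair hc hb h₁ h₂)
    · intro h₂
      by_contra h₁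
      rw [Set.pair_comm] at hdisc
      exact hdisc (hC.connectedAvoiding_pair hc hb h₂ h₁)
  · intro hsim hconn
    obtain ⟨C, hC, h₁, hF⟩ := Multigraph.ReachAvoiding.exists_isCycle
      (F := {e₁, e₂}) (by simp) (hconn (G.s e₁) (G.t e₁))
    exact hne (hF e₂ ((hsim C hC).mp h₁) (by simp)).symm
end

section
/- Torelli theorem for weighted graphs: let (G1,w1) and (G2,w2) be two stable weighted graphs of genus g. Then the Jacobian tori Jac(G1,w1) and Jac(G2,w2) are isomorphic (as lattices with bilinear forms) if and only if (G1,w1)^(2) and (G2,w2)^(2) are cyclically equivalent. -/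
/-- A sublattice `L` of `ℤ^E` has conformal circuits if every element of `L` which is nonzero at `e`
dominates, sign by sign, an element of `L` with entries in `{0, 1, -1}` which is nonzero at `e`. -/
def HasConformalCircuits {E : Type} (L : AddSubgroup (E → ℤ)) : Prop :=
  ∀ y ∈ L, ∀ e, y e ≠ 0 → ∃ d ∈ L, d e ≠ 0 ∧
    ∀ f, d f = 0 ∨ (d f = 1 ∧ 0 < y f) ∨ (d f = -1 ∧ y f < 0)

namespace HasConformalCircuits

variable {E : Type} [Fintype E] {L : AddSubgroup (E → ℤ)}

/-- Every coset of `2L` has a representative with entries in `{0, 1, -1}`. -/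
theorem exists_small_representative (hL : HasConformalCircuits L) {x : E → ℤ} (hx : x ∈ L) :
    ∃ z ∈ L, ∀ f, |x f + 2 * z f| ≤ 1 := by
  induction hn : ∑ f, (x f).natAbs using Nat.strong_induction_on generalizing x with
  | _ n ih =>
    by_cases hsmall : ∀ f, |x f| ≤ 1
    · exact ⟨0, L.zero_mem, by simpa using hsmall⟩
    push Not at hsmall
    obtain ⟨e, he⟩ := hsmall
    obtain ⟨d, hd, hde, hconf⟩ := hL x hx e (by rintro h; simp [h] at he)
    have hlt : ∑ f, ((x - (d + d)) f).natAbs < n := by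
      rw [← hn]
      refine Finset.sum_lt_sum (fun f _ => ?_) ⟨e, Finset.mem_univ e, ?_⟩
      · have := hconf f
        simp only [Pi.sub_apply, Pi.add_apply]
        omega
      · have := hconf e
        rw [lt_abs] at he
        simp only [Pi.sub_apply, Pi.add_apply]
        omega
    obtain ⟨z, hz, hsmall⟩ := ih _ hlt (L.sub_mem hx (L.add_mem hd hd)) rfl
    refine ⟨z - d, L.sub_mem hz hd, fun f => ?_⟩
    have := hsmall f
    simp only [Pi.sub_apply, Pi.add_apply] at this ⊢
    rwa [show x f + 2 * (z f - d f) = x f - (d f + d f) + 2 * z f by ring]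

/-- An additive map killing the `{0, 1, -1}`-valued elements which vanish at `e` kills all
elements which vanish at `e`. -/
theorem map_eq_zero_of_apply_eq_zero (hL : HasConformalCircuits L) {e : E} (m : L →+ ℤ)
    (hm : ∀ d : L, (∀ f, |(d : E → ℤ) f| ≤ 1) → (d : E → ℤ) e = 0 → m d = 0)
    (x : L) (hx : (x : E → ℤ) e = 0) : m x = 0 := by
  induction hn : ∑ f, ((x : E → ℤ) f).natAbs using Nat.strong_induction_on generalizing x with
  | _ n ih =>
    by_cases hzero : ∀ f, (x : E → ℤ) f = 0
    · rw [show x = 0 from Subtype.ext (funext hzero), map_zero]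
    push Not at hzero
    obtain ⟨f₀, hf₀⟩ := hzero
    obtain ⟨d, hd, hdf, hconf⟩ := hL x x.2 f₀ hf₀
    have hde : d e = 0 := by have := hconf e; omega
    have hlt : ∑ f, (((x - ⟨d, hd⟩ : L) : E → ℤ) f).natAbs < n := by
      rw [← hn]
      refine Finset.sum_lt_sum (fun f _ => ?_) ⟨f₀, Finset.mem_univ f₀, ?_⟩
      · have := hconf f
        simp only [AddSubgroup.coe_sub, Pi.sub_apply]
        omega
      · have := hconf f₀
        simp only [AddSubgroup.coe_sub, Pi.sub_apply]
        omega
    have hrest := ih _ hlt (x - ⟨d, hd⟩) (by simp [hx, hde]) rfl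
    have hd₀ := hm ⟨d, hd⟩ (fun f => by have := hconf f; simp only [abs_le]; omega) hde
    rw [map_sub, hd₀, sub_zero] at hrest
    exact hrest

end HasConformalCircuits

theorem Int.emod_two_le_sq (a : ℤ) : a % 2 ≤ a ^ 2 := by
  rcases Int.emod_two_eq_zero_or_one a with h | h
  · rw [h]; positivity
  · have : a ≠ 0 := by rintro rfl; simp at h
    have := Int.one_le_abs this
    rw [h, ← sq_abs]; nlinarith

theorem Int.sq_eq_emod_two_iff (a : ℤ) : a ^ 2 = a % 2 ↔ |a| ≤ 1 := by
  constructor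
  · intro h
    have h' : |a| ^ 2 ≤ 1 := by rw [sq_abs, h]; omega
    nlinarith [abs_nonneg a]
  · intro h
    rw [abs_le] at h
    obtain rfl | rfl | rfl : a = -1 ∨ a = 0 ∨ a = 1 := by omega
    all_goals norm_num

section Isometry

variable {E₁ E₂ : Type} [Fintype E₁] [Fintype E₂]
  {L₁ : AddSubgroup (E₁ → ℤ)} {L₂ : AddSubgroup (E₂ → ℤ)}

theorem sum_emod_two_le_of_isometry (h₁ : HasConformalCircuits L₁) (φ : L₁ ≃+ L₂)
    (hφ : ∀ x, ∑ f, (φ x : E₂ → ℤ) f ^ 2 = ∑ e, (x : E₁ → ℤ) e ^ 2) (x : L₁) :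
    ∑ f, (φ x : E₂ → ℤ) f % 2 ≤ ∑ e, (x : E₁ → ℤ) e % 2 := by
  obtain ⟨z, hz, hsmall⟩ := h₁.exists_small_representative x.2
  have hx : ∑ e, (x : E₁ → ℤ) e % 2 =
      ∑ e, ((x + (⟨z, hz⟩ + ⟨z, hz⟩) : L₁) : E₁ → ℤ) e ^ 2 := by
    refine Finset.sum_congr rfl fun e _ => ?_
    have := (Int.sq_eq_emod_two_iff _).2 (hsmall e)
    simp only [AddSubgroup.coe_add, Pi.add_apply]
    rw [show (x : E₁ → ℤ) e + (z e + z e) = (x : E₁ → ℤ) e + 2 * z e by ring, this]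
    omega
  rw [hx, ← hφ]
  refine Finset.sum_le_sum fun f _ => ?_
  refine le_trans (le_of_eq ?_) (Int.emod_two_le_sq _)
  simp only [map_add, AddSubgroup.coe_add, Pi.add_apply]
  omega

/-- An isometry preserves the number of odd coordinates. -/
theorem sum_emod_two_eq_of_isometry (h₁ : HasConformalCircuits L₁) (h₂ : HasConformalCircuits L₂)
    (φ : L₁ ≃+ L₂) (hφ : ∀ x, ∑ f, (φ x : E₂ → ℤ) f ^ 2 = ∑ e, (x : E₁ → ℤ) e ^ 2) (x : L₁) :
    ∑ f, (φ x : E₂ → ℤ) f % 2 = ∑ e, (x : E₁ → ℤ) e % 2 := by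
  refine le_antisymm (sum_emod_two_le_of_isometry h₁ φ hφ x) ?_
  have := sum_emod_two_le_of_isometry h₂ φ.symm
    (fun y => by rw [← hφ, AddEquiv.apply_symm_apply]) (φ x)
  rwa [AddEquiv.symm_apply_apply] at this

/-- An isometry preserves the elements with entries in `{0, 1, -1}`. -/
theorem abs_le_one_of_isometry (h₁ : HasConformalCircuits L₁) (h₂ : HasConformalCircuits L₂)
    (φ : L₁ ≃+ L₂) (hφ : ∀ x, ∑ f, (φ x : E₂ → ℤ) f ^ 2 = ∑ e, (x : E₁ → ℤ) e ^ 2) (x : L₁)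
    (hx : ∀ e, |(x : E₁ → ℤ) e| ≤ 1) (f : E₂) : |(φ x : E₂ → ℤ) f| ≤ 1 := by
  have hsum : ∑ f, (φ x : E₂ → ℤ) f % 2 = ∑ f, (φ x : E₂ → ℤ) f ^ 2 := by
    rw [hφ, sum_emod_two_eq_of_isometry h₁ h₂ φ hφ]
    exact Finset.sum_congr rfl fun e _ => ((Int.sq_eq_emod_two_iff _).2 (hx e)).symm
  have := (Finset.sum_eq_sum_iff_of_le fun f _ => Int.emod_two_le_sq _).1 hsum f
    (Finset.mem_univ f)
  exact (Int.sq_eq_emod_two_iff _).1 this.symm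

/-- The character `x ↦ (-1)^(m x)`. -/
def parityCharacter {A : Type} [AddCommGroup A] (m : A →+ ℤ) : Multiplicative A →* ℚ where
  toFun x := (-1) ^ (m x.toAdd).natAbs
  map_one' := by simp
  map_mul' x y := by
    rw [← pow_add]
    refine neg_one_pow_congr ?_
    simp only [toAdd_mul, map_add, Int.natAbs_even, Nat.even_add, Int.even_add]

theorem parityCharacter_apply {A : Type} [AddCommGroup A] (m : A →+ ℤ) (x : A) :
    parityCharacter m (Multiplicative.ofAdd x) = 1 - 2 * ((m x % 2 : ℤ) : ℚ) := by
  change (-1 : ℚ) ^ (m x).natAbs = _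
  rcases Int.even_or_odd (m x) with h | h
  · rw [(Int.natAbs_even.2 h).neg_one_pow, Int.even_iff.1 h]; norm_num
  · rw [(Int.natAbs_odd.2 h).neg_one_pow, Int.odd_iff.1 h]; norm_num

/-- If two families of additive maps to `ℤ` have the same number of odd values at each point, and
none of them has only even values, then they agree modulo 2 up to a bijection of the indices. -/
theorem exists_equiv_emod_two_eq {A : Type} [AddCommGroup A] (l : E₁ → A →+ ℤ) (m : E₂ → A →+ ℤ)
    (hl : ∀ e, ∃ x, l e x % 2 = 1) (hm : ∀ f, ∃ x, m f x % 2 = 1)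
    (hsum : ∀ x, ∑ f, m f x % 2 = ∑ e, l e x % 2) :
    ∃ σ : E₁ ≃ E₂, ∀ e x, m (σ e) x % 2 = l e x % 2 := by
  classical
  have nontrivial : ∀ k : A →+ ℤ, (∃ x, k x % 2 = 1) → parityCharacter k ≠ 1 := by
    rintro k ⟨x, hx⟩ h
    have := parityCharacter_apply k x
    rw [h, hx] at this
    norm_num at this
  have hli := linearIndependent_monoidHom (Multiplicative A) ℚ
  let c : (Multiplicative A →* ℚ) →₀ ℚ :=
    ∑ e, Finsupp.single (parityCharacter (l e)) 1 - ∑ f, Finsupp.single (parityCharacter (m f)) 1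
      - Finsupp.single 1 ((Fintype.card E₁ : ℚ) - Fintype.card E₂)
  have hc : c = 0 := by
    refine (linearIndependent_iff.1 hli) c ?_
    funext x
    obtain ⟨x, rfl⟩ := Multiplicative.ofAdd.surjective x
    have h := congrArg (fun k : ℤ => (k : ℚ)) (hsum x)
    simp only [Int.cast_sum] at h
    simp only [c, map_sub, map_sum, Finsupp.linearCombination_single, one_smul, Pi.sub_apply,
      Finset.sum_apply, Pi.smul_apply, parityCharacter_apply, Finset.sum_sub_distrib,
      Finset.sum_const, Finset.card_univ, ← Finset.mul_sum, h, MonoidHom.one_apply, smul_eq_mul,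
      nsmul_eq_mul, Pi.zero_apply]
    ring
  have hcard : ∀ χ, Fintype.card {e // parityCharacter (l e) = χ} =
      Fintype.card {f // parityCharacter (m f) = χ} := by
    intro χ
    by_cases hχ : χ = 1
    · subst hχ
      rw [Fintype.card_eq_zero_iff.2 ⟨fun e => nontrivial _ (hl e.1) e.2⟩,
        Fintype.card_eq_zero_iff.2 ⟨fun f => nontrivial _ (hm f.1) f.2⟩]
    · have h := DFunLike.congr_fun hc χ
      simp only [c, Finsupp.coe_sub, Finsupp.coe_finsetSum, Pi.sub_apply, Finset.sum_apply,
        Finsupp.single_apply, if_neg (Ne.symm hχ), Finset.sum_boole, Finsupp.coe_zero,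
        Pi.zero_apply, sub_zero, sub_eq_zero] at h
      rw [Fintype.card_subtype, Fintype.card_subtype]
      exact_mod_cast h
  let σ : E₁ ≃ E₂ := (Equiv.sigmaFiberEquiv fun e => parityCharacter (l e)).symm.trans
    ((Equiv.sigmaCongrRight fun χ => Fintype.equivOfCardEq (hcard χ)).trans
      (Equiv.sigmaFiberEquiv fun f => parityCharacter (m f)))
  refine ⟨σ, fun e x => ?_⟩
  have hσ : parityCharacter (m (σ e)) = parityCharacter (l e) :=
    (Fintype.equivOfCardEq (hcard (parityCharacter (l e))) ⟨e, rfl⟩).2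
  have h := DFunLike.congr_fun hσ (Multiplicative.ofAdd x)
  rw [parityCharacter_apply, parityCharacter_apply] at h
  have : ((m (σ e) x % 2 : ℤ) : ℚ) = (l e x % 2 : ℤ) := by linarith
  exact_mod_cast this

/-- The coordinate function at `e` on a sublattice of `ℤ^E`. -/
def coordinateHom {E : Type} (L : AddSubgroup (E → ℤ)) (e : E) : L →+ ℤ :=
  (Pi.evalAddMonoidHom (fun _ : E => ℤ) e).comp L.subtype

theorem coordinateHom_apply {E : Type} (L : AddSubgroup (E → ℤ)) (e : E) (x : L) :
    coordinateHom L e x = (x : E → ℤ) e := rfl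

theorem HasConformalCircuits.exists_apply_eq_one {E : Type} {L : AddSubgroup (E → ℤ)}
    (hL : HasConformalCircuits L) {e : E} (he : ∃ x ∈ L, x e ≠ 0) :
    ∃ d : L, (∀ f, |(d : E → ℤ) f| ≤ 1) ∧ (d : E → ℤ) e = 1 := by
  obtain ⟨x, hx, hxe⟩ := he
  obtain ⟨d, hd, hde, hconf⟩ := hL x hx e hxe
  have hsmall : ∀ f, |d f| ≤ 1 := fun f => by have := hconf f; rw [abs_le]; omega
  rcases (by have := hconf e; omega : d e = 1 ∨ d e = -1) with h | h
  · exact ⟨⟨d, hd⟩, hsmall, h⟩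
  · exact ⟨-⟨d, hd⟩, fun f => by simpa using hsmall f, by simp [h]⟩

/-- An isometry between sublattices of `ℤ^E₁` and `ℤ^E₂` with conformal circuits and without
identically vanishing coordinates is induced by a signed bijection of the coordinates. -/
theorem exists_signed_equiv_of_isometry (h₁ : HasConformalCircuits L₁)
    (h₂ : HasConformalCircuits L₂) (hn₁ : ∀ e, ∃ x ∈ L₁, x e ≠ 0) (hn₂ : ∀ f, ∃ x ∈ L₂, x f ≠ 0)
    (φ : L₁ ≃+ L₂) (hφ : ∀ x, ∑ f, (φ x : E₂ → ℤ) f ^ 2 = ∑ e, (x : E₁ → ℤ) e ^ 2) :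
    ∃ (σ : E₁ ≃ E₂) (ε : E₁ → ℤ), (∀ e, ε e = 1 ∨ ε e = -1) ∧
      ∀ e x, (φ x : E₂ → ℤ) (σ e) = ε e * (x : E₁ → ℤ) e := by
  obtain ⟨σ, hσ⟩ := exists_equiv_emod_two_eq (coordinateHom L₁)
    (fun f => (coordinateHom L₂ f).comp φ.toAddMonoidHom)
    (fun e => by
      obtain ⟨d, -, hd⟩ := h₁.exists_apply_eq_one (hn₁ e)
      exact ⟨d, by rw [coordinateHom_apply, hd]; norm_num⟩)
    (fun f => by
      obtain ⟨d, -, hd⟩ := h₂.exists_apply_eq_one (hn₂ f)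
      refine ⟨φ.symm d, ?_⟩
      change (φ (φ.symm d) : E₂ → ℤ) f % 2 = 1
      rw [AddEquiv.apply_symm_apply, hd]; norm_num)
    (sum_emod_two_eq_of_isometry h₁ h₂ φ hφ)
  have hparity : ∀ e (x : L₁), (φ x : E₂ → ℤ) (σ e) % 2 = (x : E₁ → ℤ) e % 2 := hσ
  choose d hdsmall hd using fun e => h₁.exists_apply_eq_one (hn₁ e)
  refine ⟨σ, fun e => (φ (d e) : E₂ → ℤ) (σ e), fun e => ?_, fun e x => ?_⟩
  · have hsmall := abs_le_one_of_isometry h₁ h₂ φ hφ _ (hdsmall e) (σ e)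
    have hp := hparity e (d e)
    rw [hd] at hp
    rw [abs_le] at hsmall
    beta_reduce
    omega
  · have hker := h₁.map_eq_zero_of_apply_eq_zero (e := e)
      ((coordinateHom L₂ (σ e)).comp φ.toAddMonoidHom)
      (fun y hy hye => by
        have hsmall := abs_le_one_of_isometry h₁ h₂ φ hφ y hy (σ e)
        have hp := hparity e y
        rw [hye] at hp
        rw [abs_le] at hsmall
        change (φ y : E₂ → ℤ) (σ e) = 0
        omega)
      (x - (x : E₁ → ℤ) e • d e) (by simp [hd])
    rw [map_sub, map_zsmul, sub_eq_zero] at hker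
    rw [mul_comm]
    exact hker

end Isometry

namespace Multigraph

variable {G : Multigraph}

/-- Flows are the edge functions orthogonal to all coboundaries. -/
theorem mem_cycleSpace_iff {x : G.E → ℤ} :
    x ∈ G.cycleSpace ↔ ∀ h : G.V → ℤ, ∑ e, x e * (h (G.t e) - h (G.s e)) = 0 := by
  have hpair : ∀ h : G.V → ℤ, ∑ e, x e * (h (G.t e) - h (G.s e)) =
      ∑ v, G.boundaryHom x v * h v := by
    intro h
    change _ = ∑ v, (∑ e : G.E,
      x e * ((if G.t e = v then 1 else 0) - (if G.s e = v then 1 else 0))) * h v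
    simp only [Finset.sum_mul]
    rw [Finset.sum_comm]
    refine Finset.sum_congr rfl fun e _ => ?_
    simp only [mul_assoc, ← Finset.mul_sum, sub_mul, ite_mul, one_mul, zero_mul,
      Finset.sum_sub_distrib, Finset.sum_ite_eq, Finset.mem_univ, if_true]
  constructor
  · intro hx h
    rw [hpair, show G.boundaryHom x = 0 from hx]
    simp
  · intro hx
    change G.boundaryHom x = 0
    funext v
    have := hx (Pi.single v 1)
    rw [hpair] at this
    simpa [Pi.single_apply] using this

/-- A closed walk without repeated edges carries a flow. -/
theorem exists_mem_cycleSpace_of_closed_walk {n : ℕ} {e : Fin n → G.E} (he : Function.Injective e)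
    (v : Fin (n + 1) → G.V) (ε : Fin n → ℤ)
    (hwalk : ∀ i (h : G.V → ℤ), ε i * (h (G.t (e i)) - h (G.s (e i))) =
      h (v i.succ) - h (v i.castSucc)) (hv : v 0 = v (Fin.last n)) :
    ∃ d ∈ G.cycleSpace, (∀ i, d (e i) = ε i) ∧ ∀ f, f ∉ Set.range e → d f = 0 := by
  have hin : ∀ i, Function.extend e ε 0 (e i) = ε i := fun i => he.extend_apply _ _ i
  have hout : ∀ f, f ∉ Set.range e → Function.extend e ε 0 f = 0 :=
    fun f hf => Function.extend_apply' _ _ _ hf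
  refine ⟨Function.extend e ε 0, mem_cycleSpace_iff.2 fun h => ?_, hin, hout⟩
  rw [← Fintype.sum_of_injective e he (fun i => h (v i.succ) - h (v i.castSucc)) _
    (fun f hf => by rw [hout f hf, zero_mul]) (fun i => by rw [hin, hwalk])]
  have h₁ := Fin.sum_univ_succ fun i => h (v i)
  have h₂ := Fin.sum_univ_castSucc fun i => h (v i)
  rw [hv] at h₁
  rw [Finset.sum_sub_distrib]
  linarith

/-- An edge on a cycle supports a flow. -/
theorem exists_mem_cycleSpace_of_not_isBridge {e : G.E} (he : ¬ G.IsBridge e) :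
    ∃ d ∈ G.cycleSpace, d e ≠ 0 := by
  classical
  simp only [IsBridge, not_forall, not_not] at he
  obtain ⟨C, ⟨n, -, c, v, hc, hwalk, hv, -, rfl⟩, heC⟩ := he
  obtain ⟨i, -, rfl⟩ := Finset.mem_image.1 heC
  obtain ⟨d, hd, hdc, -⟩ := exists_mem_cycleSpace_of_closed_walk hc v
    (fun i => if G.s (c i) = v i.castSucc ∧ G.t (c i) = v i.succ then 1 else -1)
    (fun j h => by
      split_ifs with hj
      · rw [hj.1, hj.2]; ring
      · obtain ⟨hs, ht⟩ := (hwalk j).resolve_left hj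
        rw [hs, ht]; ring) hv
  refine ⟨d, hd, ?_⟩
  rw [hdc]
  split_ifs <;> norm_num

end Multigraph

/-- Reachable points are joined by a chain without repetitions. -/
theorem Relation.ReflTransGen.exists_injective_chain {α : Type} {r : α → α → Prop} {a b : α}
    (hab : Relation.ReflTransGen r a b) :
    ∃ (n : ℕ) (p : ℕ → α), p 0 = a ∧ p n = b ∧ (∀ i < n, r (p i) (p (i + 1))) ∧
      ∀ i ≤ n, ∀ j ≤ n, p i = p j → i = j := by
  classical
  have hex : ∃ (n : ℕ) (p : ℕ → α), p 0 = a ∧ p n = b ∧ ∀ i < n, r (p i) (p (i + 1)) := by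
    induction hab with
    | refl => exact ⟨0, fun _ => a, rfl, rfl, by simp⟩
    | @tail c d _ hcd ih =>
      obtain ⟨n, p, h0, hn, hp⟩ := ih
      refine ⟨n + 1, fun i => if i ≤ n then p i else d, by simp [h0], by simp, fun i hi => ?_⟩
      rcases Nat.lt_succ_iff_lt_or_eq.1 hi with h | rfl
      · simpa [h.le, Nat.succ_le_of_lt h] using hp i h
      · simpa [hn] using hcd
  obtain ⟨p, h0, hn, hp⟩ := Nat.find_spec hex
  have hmin : ∀ i j, i < j → j ≤ Nat.find hex → p i ≠ p j := by
    intro i j hij hj heq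
    refine Nat.find_min hex (m := Nat.find hex - (j - i)) (by omega)
      ⟨fun k => if k ≤ i then p k else p (k + (j - i)), by simp [h0], ?_, fun k hk => ?_⟩
    · dsimp only
      split_ifs with h
      · rw [show Nat.find hex - (j - i) = i by omega, heq, show j = Nat.find hex by omega, hn]
      · rw [show Nat.find hex - (j - i) + (j - i) = Nat.find hex by omega, hn]
    · dsimp only
      rcases lt_trichotomy k i with h | rfl | h
      · rw [if_pos h.le, if_pos (by omega)]; exact hp k (by omega)
      · rw [if_pos le_rfl, if_neg (by omega), heq, show k + 1 + (j - k) = j + 1 by omega]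
        exact hp j (by omega)
      · rw [if_neg (by omega), if_neg (by omega),
          show k + 1 + (j - i) = k + (j - i) + 1 by omega]
        exact hp _ (by omega)
  refine ⟨_, p, h0, hn, hp, fun i hi j hj heq => ?_⟩
  by_contra hne
  rcases Nat.lt_or_gt_of_ne hne with h | h
  · exact hmin i j h hj heq
  · exact hmin j i h hi heq.symm

namespace Multigraph

variable {G : Multigraph}

/-- A flow which is nonzero at `e` dominates, sign by sign, an oriented cycle through `e`. -/
theorem exists_conformal_cycle {y : G.E → ℤ} (hy : y ∈ G.cycleSpace) {e : G.E} (he : y e ≠ 0) :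
    ∃ C, G.IsCycle C ∧ e ∈ C ∧ ∃ d ∈ G.cycleSpace, d e ≠ 0 ∧
      ∀ f, d f = 0 ∨ (d f = 1 ∧ 0 < y f) ∨ (d f = -1 ∧ y f < 0) := by
  classical
  let tail : G.E → G.V := fun f => if 0 < y f then G.s f else G.t f
  let head : G.E → G.V := fun f => if 0 < y f then G.t f else G.s f
  have habs : ∀ f (h : G.V → ℤ), y f * (h (G.t f) - h (G.s f)) =
      |y f| * (h (head f) - h (tail f)) := by
    intro f h
    by_cases hf : 0 < y f
    · simp [head, tail, hf, abs_of_pos hf]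
    · simp only [head, tail, hf, if_false, abs_of_nonpos (not_lt.1 hf)]; ring
  let step : G.V → G.V → Prop := fun a b => ∃ f, y f ≠ 0 ∧ tail f = a ∧ head f = b
  have hreach : Relation.ReflTransGen step (head e) (tail e) := by
    by_contra hnot
    let h : G.V → ℤ := fun v => if Relation.ReflTransGen step (head e) v then 1 else 0
    refine (mem_cycleSpace_iff.1 hy h).not_gt ?_
    refine Finset.sum_pos' (fun f _ => ?_) ⟨e, Finset.mem_univ e, ?_⟩
    · rw [habs]
      by_cases hf : y f = 0
      · simp [hf]
      refine mul_nonneg (abs_nonneg _) (sub_nonneg.2 ?_)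
      by_cases ht : Relation.ReflTransGen step (head e) (tail f)
      · have : Relation.ReflTransGen step (head e) (head f) := ht.tail ⟨f, hf, rfl, rfl⟩
        simp [h, ht, this]
      · simp only [h, ht, if_false]; split_ifs <;> norm_num
    · rw [habs]
      simp only [h, hnot, Relation.ReflTransGen.refl, if_true, if_false]
      simpa using he
  obtain ⟨n, p, hp0, hpn, hp, hinj⟩ := hreach.exists_injective_chain
  have : Nonempty G.E := ⟨e⟩
  choose! q hq0 hqt hqh using hp
  let c : Fin (n + 1) → G.E := fun i => if (i : ℕ) < n then q i else e
  let v : Fin (n + 2) → G.V := fun i => if (i : ℕ) ≤ n then p i else p 0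
  have hlast : c (Fin.last n) = e := by simp [c]
  have hc0 : ∀ i, y (c i) ≠ 0 := by
    intro i
    by_cases hi : (i : ℕ) < n
    · simpa [c, hi] using hq0 i hi
    · simpa [c, hi] using he
  have htail' : ∀ i, tail (c i) = p i := by
    intro i
    by_cases hi : (i : ℕ) < n
    · simpa only [c, hi, if_true] using hqt i hi
    · simp only [c, hi, if_false]; rw [← hpn]; congr 1; omega
  have htail : ∀ i, tail (c i) = v i.castSucc := by
    intro i
    rw [htail']
    simp [v, Nat.le_of_lt_succ i.2]
  have hhead : ∀ i, head (c i) = v i.succ := by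
    intro i
    by_cases hi : (i : ℕ) < n
    · have h1 : (i : ℕ) + 1 ≤ n := hi
      simpa only [c, hi, if_true, v, Fin.val_succ, h1] using hqh i hi
    · have h1 : ¬ (i : ℕ) + 1 ≤ n := hi
      simp only [c, hi, if_false, v, Fin.val_succ, h1, hp0]
  have hcinj : Function.Injective c := by
    intro i j hij
    have := congrArg tail hij
    rw [htail', htail'] at this
    exact Fin.ext (hinj i (Nat.le_of_lt_succ i.2) j (Nat.le_of_lt_succ j.2) this)
  have hclosed : v 0 = v (Fin.last (n + 1)) := by simp [v]
  refine ⟨Finset.image c Finset.univ, ⟨n + 1, n.succ_pos, c, v, hcinj, fun i => ?_, hclosed,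
    fun i j hij => ?_, rfl⟩, Finset.mem_image.2 ⟨Fin.last n, Finset.mem_univ _, hlast⟩, ?_⟩
  · rw [← htail, ← hhead]
    by_cases hi : 0 < y (c i) <;> simp [tail, head, hi]
  · simp only [Fin.ext_iff, Fin.val_zero, Fin.val_last]
    have hi := i.2
    have hj := j.2
    by_cases h1 : (i : ℕ) ≤ n <;> by_cases h2 : (j : ℕ) ≤ n <;>
      simp only [v, h1, h2, if_true, if_false] at hij
    · exact Or.inl (hinj _ h1 _ h2 hij)
    · have := hinj _ h1 _ n.zero_le hij; omega
    · have := hinj _ n.zero_le _ h2 hij; omega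
    · omega
  · obtain ⟨d, hd, hdc, hd0⟩ := exists_mem_cycleSpace_of_closed_walk hcinj v
      (fun i => if 0 < y (c i) then 1 else -1)
      (fun i h => by
        rw [← htail, ← hhead]
        by_cases hi : 0 < y (c i) <;> simp [tail, head, hi]) hclosed
    refine ⟨d, hd, ?_, fun f => ?_⟩
    · rw [← hlast, hdc]; split_ifs <;> norm_num
    · by_cases hf : f ∈ Set.range c
      · obtain ⟨i, rfl⟩ := hf
        have := hc0 i
        rw [hdc]
        split_ifs <;> omega
      · exact Or.inl (hd0 f hf)

theorem hasConformalCircuits_cycleSpace (G : Multigraph) : HasConformalCircuits G.cycleSpace := by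
  intro y hy e he
  obtain ⟨-, -, -, h⟩ := exists_conformal_cycle hy he
  exact h

theorem apply_eq_zero_of_isBridge {x : G.E → ℤ} (hx : x ∈ G.cycleSpace) {e : G.E}
    (he : G.IsBridge e) : x e = 0 := by
  by_contra h
  obtain ⟨C, hC, heC, -⟩ := exists_conformal_cycle hx h
  exact he C hC heC

/-- Vertices identified by contracting `F` are joined by a chain supported on `F`. -/
theorem exists_chain_of_eqvGen {F : Set G.E} {a b : G.V}
    (hab : Relation.EqvGen (fun a b : G.V => ∃ e ∈ F, G.s e = a ∧ G.t e = b) a b) :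
    ∃ P : G.E → ℤ, (∀ e, e ∉ F → P e = 0) ∧
      ∀ h : G.V → ℤ, ∑ e, P e * (h (G.t e) - h (G.s e)) = h b - h a := by
  induction hab with
  | rel a b hab =>
    obtain ⟨e, he, rfl, rfl⟩ := hab
    refine ⟨Pi.single e 1, fun f hf => Pi.single_eq_of_ne (by rintro rfl; exact hf he) _,
      fun h => ?_⟩
    simp [Pi.single_apply]
  | refl a => exact ⟨0, by simp, by simp⟩
  | symm a b _ ih =>
    obtain ⟨P, hP, hd⟩ := ih
    refine ⟨-P, fun e he => by simp [hP e he], fun h => ?_⟩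
    simp only [Pi.neg_apply, neg_mul, Finset.sum_neg_distrib, hd]
    ring
  | trans a b c _ _ ih₁ ih₂ =>
    obtain ⟨P, hP, hPd⟩ := ih₁
    obtain ⟨Q, hQ, hQd⟩ := ih₂
    refine ⟨P + Q, fun e he => by simp [hP e he, hQ e he], fun h => ?_⟩
    simp only [Pi.add_apply, add_mul, Finset.sum_add_distrib, hPd, hQd]
    ring

/-- A flow on the contraction of `F` extends to a flow on the whole graph. -/
theorem exists_extension_of_mem_cycleSpace_contractSet (F : Set G.E)
    {y : (G.contractSet F).E → ℤ} (hy : y ∈ (G.contractSet F).cycleSpace) :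
    ∃ x ∈ G.cycleSpace, ∀ e : (G.contractSet F).E, x e.1 = y e := by
  classical
  let π : G.V → (G.contractSet F).V := Quot.mk _
  have hout : ∀ q, ∃ v, π v = q := fun q => Quot.exists_rep q
  choose rep hrep using hout
  have hchain : ∀ v, ∃ P : G.E → ℤ, (∀ e, e ∉ F → P e = 0) ∧
      ∀ h : G.V → ℤ, ∑ e, P e * (h (G.t e) - h (G.s e)) = h v - h (rep (π v)) :=
    fun v => exists_chain_of_eqvGen (Quot.eqvGen_exact (hrep (π v)))
  choose P hP hPd using hchain
  let ext : G.E → ℤ := fun f => if h : f ∉ F then y ⟨f, h⟩ else 0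
  let z : G.E → ℤ := fun f =>
    ∑ e : (G.contractSet F).E, y e * (P (G.t e.1) f - P (G.s e.1) f)
  have hz : ∀ f, f ∉ F → z f = 0 := fun f hf => by simp [z, hP _ f hf]
  have hext : ∀ e : (G.contractSet F).E, ext e.1 = y e := fun e => dif_pos e.2
  refine ⟨ext - z, mem_cycleSpace_iff.2 fun h => ?_, fun e => by
    rw [Pi.sub_apply, hext, hz _ e.2, sub_zero]⟩
  have hsum_ext : ∑ f, ext f * (h (G.t f) - h (G.s f)) =
      ∑ e : (G.contractSet F).E, y e * (h (G.t e.1) - h (G.s e.1)) := by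
    refine (Fintype.sum_of_injective (fun e : (G.contractSet F).E => e.1)
      Subtype.val_injective _ _ (fun f hf => ?_) (fun e => by rw [hext])).symm
    have : ¬ f ∉ F := fun hf' => hf ⟨⟨f, hf'⟩, rfl⟩
    simp [ext, this]
  have hsum_z : ∑ f, z f * (h (G.t f) - h (G.s f)) =
      ∑ e : (G.contractSet F).E, y e * ((h (G.t e.1) - h (rep (π (G.t e.1)))) -
        (h (G.s e.1) - h (rep (π (G.s e.1))))) := by
    simp only [z, Finset.sum_mul]
    rw [Finset.sum_comm]
    refine Finset.sum_congr rfl fun e _ => ?_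
    rw [← hPd, ← hPd, ← Finset.sum_sub_distrib, Finset.mul_sum]
    exact Finset.sum_congr rfl fun f _ => by ring
  have hflow : ∑ e : (G.contractSet F).E, y e *
      (h (rep (π (G.t e.1))) - h (rep (π (G.s e.1)))) = 0 :=
    mem_cycleSpace_iff.1 hy fun q => h (rep q)
  simp only [Pi.sub_apply, sub_mul, Finset.sum_sub_distrib, hsum_ext, hsum_z]
  rw [← Finset.sum_sub_distrib, ← hflow]
  exact Finset.sum_congr rfl fun e _ => by ring

theorem restrict_mem_cycleSpace_contractSet {F : Set G.E} {x : G.E → ℤ} (hx : x ∈ G.cycleSpace)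
    (hF : ∀ e ∈ F, x e = 0) :
    (fun e : (G.contractSet F).E => x e.1) ∈ (G.contractSet F).cycleSpace := by
  refine mem_cycleSpace_iff.2 fun h => ?_
  rw [← mem_cycleSpace_iff.1 hx fun v => h (Quot.mk _ v)]
  refine Fintype.sum_of_injective (fun e : (G.contractSet F).E => e.1)
    Subtype.val_injective _ _ (fun f hf => ?_) (fun e => rfl)
  have : f ∈ F := by by_contra hf'; exact hf ⟨⟨f, hf'⟩, rfl⟩
  rw [hF f this, zero_mul]

/-- Restriction of flows to the non-bridge edges. -/
noncomputable def restrictHom (G : Multigraph) :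
    G.cycleSpace →+ G.contractBridges.cycleSpace where
  toFun x := ⟨fun e => (x : G.E → ℤ) e.1,
    restrict_mem_cycleSpace_contractSet x.2 fun _ he => apply_eq_zero_of_isBridge x.2 he⟩
  map_zero' := rfl
  map_add' _ _ := rfl

theorem restrictHom_apply (x : G.cycleSpace) (e : G.contractBridges.E) :
    (G.restrictHom x : G.contractBridges.E → ℤ) e = (x : G.E → ℤ) e.1 := rfl

theorem restrictHom_bijective (G : Multigraph) : Function.Bijective G.restrictHom := by
  constructor
  · rw [injective_iff_map_eq_zero]
    intro x hx
    refine Subtype.ext (funext fun e => ?_)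
    by_cases he : G.IsBridge e
    · exact apply_eq_zero_of_isBridge x.2 he
    · exact congrFun (congrArg Subtype.val hx) ⟨e, he⟩
  · intro y
    obtain ⟨x, hx, hxy⟩ := exists_extension_of_mem_cycleSpace_contractSet _ y.2
    exact ⟨⟨x, hx⟩, Subtype.ext (funext hxy)⟩

/-- The cycle space does not change when the bridges are contracted. -/
noncomputable def contractBridgesEquiv (G : Multigraph) :
    G.cycleSpace ≃+ G.contractBridges.cycleSpace :=
  AddEquiv.ofBijective G.restrictHom G.restrictHom_bijective

theorem contractBridgesEquiv_isometry (x y : G.cycleSpace) :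
    ∑ e, (G.contractBridgesEquiv x : G.contractBridges.E → ℤ) e *
      (G.contractBridgesEquiv y : G.contractBridges.E → ℤ) e =
    ∑ e, (x : G.E → ℤ) e * (y : G.E → ℤ) e := by
  refine Fintype.sum_of_injective (fun e : G.contractBridges.E => e.1)
    Subtype.val_injective _ _ (fun f hf => ?_) (fun e => rfl)
  have : G.IsBridge f := by by_contra hf'; exact hf ⟨⟨f, hf'⟩, rfl⟩
  rw [apply_eq_zero_of_isBridge x.2 this, zero_mul]

theorem exists_mem_cycleSpace_contractBridges (e : G.contractBridges.E) :
    ∃ x ∈ G.contractBridges.cycleSpace, x e ≠ 0 := by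
  obtain ⟨d, hd, hde⟩ := exists_mem_cycleSpace_of_not_isBridge e.2
  exact ⟨_, (G.restrictHom ⟨d, hd⟩).2, hde⟩

/-- The rank of the cycle space of a connected graph is its first Betti number. -/
theorem finrank_cycleSpace (hG : G.Connected) : (Module.finrank ℤ G.cycleSpace : ℤ) = G.b1 := by
  obtain ⟨⟨v₀⟩, hconn⟩ := hG
  let boundary : (G.E → ℤ) →ₗ[ℤ] (G.V → ℤ) := G.boundaryHom.toIntLinearMap
  let total : (G.V → ℤ) →ₗ[ℤ] ℤ := ∑ v, LinearMap.proj v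
  have htotal : ∀ D, total D = ∑ v, D v := fun D => by simp [total]
  have hchain : ∀ v, ∃ P : G.E → ℤ, boundary P = Pi.single v 1 - Pi.single v₀ 1 := by
    intro v
    have heqv : Relation.EqvGen
        (fun a b : G.V => ∃ e ∈ Set.univ, G.s e = a ∧ G.t e = b) v₀ v := by
      induction hconn v₀ v with
      | refl => exact .refl _
      | tail _ hstep ih =>
        refine ih.trans _ _ _ ?_
        obtain ⟨e, h | h⟩ := hstep
        · exact .rel _ _ ⟨e, trivial, h⟩
        · exact .symm _ _ (.rel _ _ ⟨e, trivial, h⟩)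
    obtain ⟨P, -, hP⟩ := exists_chain_of_eqvGen heqv
    refine ⟨P, funext fun u => ?_⟩
    change ∑ e : G.E, P e * ((if G.t e = u then 1 else 0) - (if G.s e = u then 1 else 0)) = _
    rw [hP fun w => if w = u then 1 else 0]
    simp [Pi.single_apply, eq_comm]
  have hrange : LinearMap.range boundary = LinearMap.ker total := by
    apply le_antisymm
    · rintro _ ⟨x, rfl⟩
      rw [LinearMap.mem_ker, htotal]
      change ∑ v, ∑ e : G.E,
        x e * ((if G.t e = v then 1 else 0) - (if G.s e = v then 1 else 0)) = 0
      rw [Finset.sum_comm]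
      simp [← Finset.mul_sum]
    · intro D hD
      rw [LinearMap.mem_ker, htotal] at hD
      choose P hP using hchain
      refine ⟨∑ v, D v • P v, ?_⟩
      simp only [map_sum, map_smul, hP]
      funext u
      simp [Pi.single_apply, mul_sub, Finset.sum_sub_distrib, hD]
  have hsurj : LinearMap.range total = ⊤ := by
    refine LinearMap.range_eq_top.2 fun k => ⟨Pi.single v₀ k, ?_⟩
    rw [htotal]
    simp
  have h₁ := (LinearMap.ker boundary).finrank_quotient_add_finrank
  have h₂ := (LinearMap.ker total).finrank_quotient_add_finrank
  rw [total.quotKerEquivRange.finrank_eq, hsurj, finrank_top, Module.finrank_self,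
    Module.finrank_fintype_fun_eq_card] at h₂
  rw [boundary.quotKerEquivRange.finrank_eq, hrange, Module.finrank_fintype_fun_eq_card] at h₁
  have h₃ : Module.finrank ℤ (LinearMap.ker boundary) = Module.finrank ℤ G.cycleSpace := rfl
  rw [h₃] at h₁
  unfold b1
  omega

end Multigraph

namespace WeightedGraph

/-- The isotropic vectors of the Jacobian lattice are those of the extra summand. -/
theorem jacForm_self_eq_zero_iff {X : WeightedGraph} (p : X.JacLattice) :
    X.jacForm p p = 0 ↔ p.1 = 0 := by
  constructor
  · intro h
    have h' := (Finset.sum_eq_zero_iff_of_nonneg fun e _ => mul_self_nonneg _).1 h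
    exact Subtype.ext (funext fun e => mul_self_eq_zero.1 (h' e (Finset.mem_univ e)))
  · intro h
    simp [jacForm, h]

/-- Modulo the extra summands, an isometry of Jacobian lattices depends only on the cycle. -/
theorem fst_apply_eq_of_fst_eq {X₁ X₂ : WeightedGraph} (φ : X₁.JacLattice ≃+ X₂.JacLattice)
    (hφ : ∀ p q, X₂.jacForm (φ p) (φ q) = X₁.jacForm p q) {p q : X₁.JacLattice}
    (hpq : p.1 = q.1) : (φ p).1 = (φ q).1 := by
  rw [← sub_eq_zero, ← Prod.fst_sub, ← map_sub, ← jacForm_self_eq_zero_iff, hφ,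
    jacForm_self_eq_zero_iff, Prod.fst_sub, hpq, sub_self]

/-- An isometry of Jacobian lattices induces an isometry of the cycle spaces. -/
theorem exists_cycleSpace_isometry {X₁ X₂ : WeightedGraph} (φ : X₁.JacLattice ≃+ X₂.JacLattice)
    (hφ : ∀ p q, X₂.jacForm (φ p) (φ q) = X₁.jacForm p q) : JacIsoGraph X₁.G X₂.G := by
  have hφ' : ∀ p q, X₁.jacForm (φ.symm p) (φ.symm q) = X₂.jacForm p q := fun p q => by
    rw [← hφ, AddEquiv.apply_symm_apply, AddEquiv.apply_symm_apply]
  refine ⟨{ toFun := fun x => (φ (x, 0)).1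
            invFun := fun y => (φ.symm (y, 0)).1
            left_inv := fun x => ?_
            right_inv := fun y => ?_
            map_add' := fun x y => ?_ }, fun x y => hφ (x, 0) (y, 0)⟩
  · exact (fst_apply_eq_of_fst_eq φ.symm hφ' (p := ((φ (x, 0)).1, 0)) (q := φ (x, 0)) rfl).trans
      (by rw [AddEquiv.symm_apply_apply])
  · exact (fst_apply_eq_of_fst_eq φ hφ (p := ((φ.symm (y, 0)).1, 0)) (q := φ.symm (y, 0)) rfl).trans
      (by rw [AddEquiv.apply_symm_apply])
  · rw [← Prod.fst_add, ← map_add, Prod.mk_add_mk, add_zero]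

end WeightedGraph

theorem JacIsoGraph.symm {G₁ G₂ : Multigraph} (h : JacIsoGraph G₁ G₂) : JacIsoGraph G₂ G₁ := by
  obtain ⟨φ, hφ⟩ := h
  exact ⟨φ.symm, fun x y => by rw [← hφ, AddEquiv.apply_symm_apply, AddEquiv.apply_symm_apply]⟩

theorem JacIsoGraph.trans {G₁ G₂ G₃ : Multigraph} (h : JacIsoGraph G₁ G₂)
    (h' : JacIsoGraph G₂ G₃) : JacIsoGraph G₁ G₃ := by
  obtain ⟨φ, hφ⟩ := h
  obtain ⟨ψ, hψ⟩ := h'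
  exact ⟨φ.trans ψ, fun x y => (hψ _ _).trans (hφ x y)⟩

theorem jacIsoGraph_contractBridges (G : Multigraph) : JacIsoGraph G G.contractBridges :=
  ⟨G.contractBridgesEquiv, Multigraph.contractBridgesEquiv_isometry⟩

theorem CyclicallyEquivalent.jacIsoGraph {G₁ G₂ : Multigraph} (h : CyclicallyEquivalent G₁ G₂) :
    JacIsoGraph G₁ G₂ := by
  obtain ⟨σ, ε, hε, himage⟩ := h
  have hsq : ∀ e, ε e * ε e = 1 := fun e => by rcases hε e with h | h <;> simp [h]
  let T : G₁.cycleSpace →+ G₂.cycleSpace :=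
    { toFun := fun x => ⟨fun f => ε (σ.symm f) * (x : G₁.E → ℤ) (σ.symm f), by
        rw [← SetLike.mem_coe, ← himage]; exact ⟨x, x.2, rfl⟩⟩
      map_zero' := Subtype.ext (funext fun f => by simp)
      map_add' := fun x y => Subtype.ext (funext fun f => by simp [mul_add]) }
  have hT : ∀ (x : G₁.cycleSpace) f,
      (T x : G₂.E → ℤ) f = ε (σ.symm f) * (x : G₁.E → ℤ) (σ.symm f) := fun _ _ => rfl
  have hbij : Function.Bijective T := by
    constructor
    · rw [injective_iff_map_eq_zero]
      intro x hx
      refine Subtype.ext (funext fun e => ?_)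
      have h := hT x (σ e)
      rw [hx, Equiv.symm_apply_apply] at h
      have hne : ε e ≠ 0 := by rcases hε e with h | h <;> simp [h]
      exact (mul_eq_zero.1 h.symm).resolve_left hne
    · intro y
      obtain ⟨x, hx, hxy⟩ := himage.superset y.2
      exact ⟨⟨x, hx⟩, Subtype.ext hxy⟩
  refine ⟨AddEquiv.ofBijective T hbij, fun x y => ?_⟩
  simp only [AddEquiv.ofBijective_apply, hT]
  rw [← Equiv.sum_comp σ]
  refine Finset.sum_congr rfl fun e _ => ?_
  rw [Equiv.symm_apply_apply, mul_mul_mul_comm, hsq, one_mul]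

/-- Torelli theorem for graphs without bridges. -/
theorem JacIsoGraph.cyclicallyEquivalent {G₁ G₂ : Multigraph} (h : JacIsoGraph G₁ G₂)
    (hn₁ : ∀ e, ∃ x ∈ G₁.cycleSpace, x e ≠ 0) (hn₂ : ∀ e, ∃ x ∈ G₂.cycleSpace, x e ≠ 0) :
    CyclicallyEquivalent G₁ G₂ := by
  obtain ⟨φ, hφ⟩ := h
  obtain ⟨σ, ε, hε, hsigned⟩ := exists_signed_equiv_of_isometry
    G₁.hasConformalCircuits_cycleSpace G₂.hasConformalCircuits_cycleSpace hn₁ hn₂ φ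
    (fun x => by simpa only [sq] using hφ x x)
  have hT : ∀ x : G₁.cycleSpace,
      (fun f => ε (σ.symm f) * (x : G₁.E → ℤ) (σ.symm f)) = (φ x : G₂.E → ℤ) := fun x =>
    funext fun f => by rw [← hsigned, Equiv.apply_symm_apply]
  refine ⟨σ, ε, hε, Set.Subset.antisymm ?_ fun y hy => ?_⟩
  · rintro _ ⟨x, hx, rfl⟩
    have := (φ ⟨x, hx⟩).2
    rwa [← hT] at this
  · refine ⟨φ.symm ⟨y, hy⟩, (φ.symm ⟨y, hy⟩).2, ?_⟩
    beta_reduce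
    rw [hT, AddEquiv.apply_symm_apply]

theorem JacIsoGraph.b1_eq {G₁ G₂ : Multigraph} (h : JacIsoGraph G₁ G₂) (h₁ : G₁.Connected)
    (h₂ : G₂.Connected) : G₁.b1 = G₂.b1 := by
  obtain ⟨φ, -⟩ := h
  rw [← Multigraph.finrank_cycleSpace h₁, ← Multigraph.finrank_cycleSpace h₂,
    φ.toIntLinearEquiv.finrank_eq]

/-- Torelli theorem for weighted graphs: for two stable weighted graphs
of genus `g`, the Jacobian tori are isomorphic (as lattices with bilinear forms) if and
only if `(G₁,w₁)^(2)` and `(G₂,w₂)^(2)` are cyclically equivalent. -/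
theorem weighted_graph_torelli (X₁ X₂ : WeightedGraph) (g : ℤ)
    (h₁ : X₁.Stable) (h₂ : X₂.Stable) (hg₁ : X₁.genus = g) (hg₂ : X₂.genus = g) :
    (∃ φ : X₁.JacLattice ≃+ X₂.JacLattice,
      ∀ p q : X₁.JacLattice, X₂.jacForm (φ p) (φ q) = X₁.jacForm p q) ↔
    CyclicallyEquivalent X₁.G.contractBridges X₂.G.contractBridges := by
  constructor
  · rintro ⟨φ, hφ⟩
    have h := WeightedGraph.exists_cycleSpace_isometry φ hφ
    exact (((jacIsoGraph_contractBridges X₁.G).symm.trans h).trans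
      (jacIsoGraph_contractBridges X₂.G)).cyclicallyEquivalent
      Multigraph.exists_mem_cycleSpace_contractBridges
      Multigraph.exists_mem_cycleSpace_contractBridges
  · intro h
    have hiso : JacIsoGraph X₁.G X₂.G := ((jacIsoGraph_contractBridges X₁.G).trans
      h.jacIsoGraph).trans (jacIsoGraph_contractBridges X₂.G).symm
    have hweight : X₁.totalWeight = X₂.totalWeight := by
      have hb := hiso.b1_eq h₁.1 h₂.1
      have hgenus := hg₁.trans hg₂.symm
      unfold WeightedGraph.genus at hgenus
      rw [hb, add_right_inj] at hgenus
      unfold WeightedGraph.totalWeight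
      exact_mod_cast hgenus
    obtain ⟨φ, hφ⟩ := hiso
    exact ⟨φ.prodCongr (LinearEquiv.funCongrLeft ℤ ℤ (finCongr hweight.symm)).toAddEquiv,
      fun p q => hφ p.1 q.1⟩
end
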